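/- Let G be the one-relator group G = ⟨x₁,…,x_k, y₁,…,y_s | vu = 1⟩, where v is a nontrivial freely reduced word in x₁,…,x_k, u is a nontrivial freely reduced word in y₁,…,y_s, and u is not a proper power in the free group F(y₁,…,y_s). Then G is word hyperbolic and has property (Q). -/

import Mathlib

universe u v w

section Defs

variable {G : Type u} [Group G]

/-- A finite generating set closed under inversion. -/
def IsSymmGen (X : Set G) : Prop :=
  X.Finite ∧ (∀ x ∈ X, x⁻¹ ∈ X) ∧ Subgroup.closure X = ⊤

/-- Word length of `g` with respect to `X`. -/
noncomputable def wordLength (X : Set G) (g : G) : ℕ :=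
  sInf {n : ℕ | ∃ l : List G, l.length = n ∧ (∀ x ∈ l, x ∈ X) ∧ l.prod = g}

/-- Word metric. -/
noncomputable def wordDist (X : Set G) (g h : G) : ℕ :=
  wordLength X (g⁻¹ * h)

/-- Gromov product with respect to the word metric. -/
noncomputable def gromovProd (X : Set G) (x y w : G) : ℝ :=
  ((wordDist X x w : ℝ) + (wordDist X y w : ℝ) - (wordDist X x y : ℝ)) / 2

end Defs

/-- A group is word hyperbolic if for some finite symmetric generating set the Gromov
product satisfies the hyperbolicity inequality. -/
def IsWordHyperbolic (G : Type u) [Group G] : Prop :=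
  ∃ X : Set G, IsSymmGen X ∧ ∃ δ : ℝ, 0 ≤ δ ∧
    ∀ x y z w : G,
      gromovProd X x z w ≥ min (gromovProd X x y w) (gromovProd X y z w) - δ

/-- A subgroup is quasiconvex: it is finitely generated and word lengths distort linearly. -/
def IsQuasiconvex {G : Type u} [Group G] (A : Subgroup G) : Prop :=
  ∃ Y : Set ↥A, IsSymmGen Y ∧ ∃ X : Set G, IsSymmGen X ∧ ∃ c : ℝ, 0 < c ∧
    ∀ a : ↥A, (wordLength Y a : ℝ) ≤ c * (wordLength X (a : G) : ℝ) + c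

/-- Property (Q): every finitely generated subgroup is quasiconvex. -/
def HasPropertyQ (G : Type u) [Group G] : Prop :=
  ∀ H : Subgroup G, H.FG → IsQuasiconvex H

/-- A group is virtually cyclic if it has a cyclic subgroup of finite index. -/
def IsVirtuallyCyclic (C : Type u) [Group C] : Prop :=
  ∃ Z : Subgroup C, IsCyclic ↥Z ∧ Z.FiniteIndex

/-- `G` is the amalgamated free product of its subgroups `A` and `B` along `C`:
`C = A ⊓ B`, `A ⊔ B = ⊤` and `G` has the pushout universal property. -/
structure IsAmalgamatedFreeProduct {G : Type u} [Group G] (A B C : Subgroup G) : Prop where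
  le_left : C ≤ A
  le_right : C ≤ B
  inf_eq : A ⊓ B = C
  sup_eq_top : A ⊔ B = ⊤
  univ : ∀ (K : Type u) [Group K] (f : ↥A →* K) (g : ↥B →* K),
    (∀ (c : G) (hA : c ∈ A) (hB : c ∈ B), f ⟨c, hA⟩ = g ⟨c, hB⟩) →
    ∃ h : G →* K, (∀ a : ↥A, h a = f a) ∧ (∀ b : ↥B, h b = g b)

section Words

variable {G : Type u} [Group G]

/-- A word over the alphabet `X`. -/
def IsWordOver (X : Set G) (l : List G) : Prop := ∀ x ∈ l, x ∈ X

/-- A geodesic word over `X`. -/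
def IsGeodesicWord (X : Set G) (l : List G) : Prop :=
  IsWordOver X l ∧ l.length = wordLength X l.prod

/-- A `lam`-quasigeodesic word over `X`: every subword `v` satisfies
`l(v) ≤ lam * l_X(v̄) + lam`. -/
def IsQuasigeodesicWord (X : Set G) (lam : ℝ) (l : List G) : Prop :=
  IsWordOver X l ∧
    ∀ v : List G, v <:+: l → (v.length : ℝ) ≤ lam * (wordLength X v.prod : ℝ) + lam

/-- `g` is a shortest element of the subset `S` with respect to `wordLength X`. -/
def ShortestIn (X : Set G) (g : G) (S : Set G) : Prop :=
  g ∈ S ∧ ∀ s ∈ S, wordLength X g ≤ wordLength X s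

end Words

/-- `G` together with `ια, ιβ` is the pushout of `ℤ → A, 1 ↦ x` and `ℤ → B, 1 ↦ y`. -/
structure IsAmalgamOverZ {A : Type u} {B : Type v} {G : Type w}
    [Group A] [Group B] [Group G]
    (ια : A →* G) (ιβ : B →* G) (x : A) (y : B) : Prop where
  comm : ια x = ιβ y
  gen : ια.range ⊔ ιβ.range = ⊤
  univ : ∀ (K : Type (max u v w)) [Group K] (f : A →* K) (g : B →* K),
    f x = g y → ∃ h : G →* K, h.comp ια = f ∧ h.comp ιβ = g

section WordLength

variable {G : Type u} [Group G] {X : Set G}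

theorem wordLength_prod_le {l : List G} (hl : ∀ x ∈ l, x ∈ X) :
    wordLength X l.prod ≤ l.length :=
  Nat.sInf_le ⟨l, rfl, hl, rfl⟩

theorem exists_geodesic_word (hX : ∀ x ∈ X, x⁻¹ ∈ X) {g : G} (hg : g ∈ Subgroup.closure X) :
    ∃ l : List G, l.length = wordLength X g ∧ (∀ x ∈ l, x ∈ X) ∧ l.prod = g := by
  have hne : {n : ℕ | ∃ l : List G, l.length = n ∧ (∀ x ∈ l, x ∈ X) ∧ l.prod = g}.Nonempty := by
    rw [← Subgroup.mem_toSubmonoid, Subgroup.closure_toSubmonoid] at hg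
    obtain ⟨l, hl, rfl⟩ := Submonoid.exists_list_of_mem_closure hg
    refine ⟨l.length, l, rfl, fun x hx => ?_, rfl⟩
    rcases hl x hx with h | h
    · exact h
    · simpa using hX _ h
  exact Nat.sInf_mem hne

theorem wordLength_one : wordLength X (1 : G) = 0 := by
  have := wordLength_prod_le (X := X) (l := []) (by simp)
  simpa using this

theorem wordLength_le_one {x : G} (hx : x ∈ X) : wordLength X x ≤ 1 := by
  have := wordLength_prod_le (X := X) (l := [x]) (by simpa using hx)
  simpa using this

theorem wordLength_mul_le (hX : ∀ x ∈ X, x⁻¹ ∈ X) {g h : G} (hg : g ∈ Subgroup.closure X)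
    (hh : h ∈ Subgroup.closure X) :
    wordLength X (g * h) ≤ wordLength X g + wordLength X h := by
  obtain ⟨l, hl, hlX, rfl⟩ := exists_geodesic_word hX hg
  obtain ⟨m, hm, hmX, rfl⟩ := exists_geodesic_word hX hh
  rw [← hl, ← hm, ← List.prod_append, ← List.length_append]
  exact wordLength_prod_le fun x hx => (List.mem_append.1 hx).elim (hlX x) (hmX x)

theorem wordLength_inv_le (hX : ∀ x ∈ X, x⁻¹ ∈ X) {g : G} (hg : g ∈ Subgroup.closure X) :
    wordLength X g⁻¹ ≤ wordLength X g := by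
  obtain ⟨l, hl, hlX, rfl⟩ := exists_geodesic_word hX hg
  rw [← hl, List.prod_inv_reverse]
  refine (wordLength_prod_le fun x hx => ?_).trans (by simp)
  simp only [List.mem_reverse, List.mem_map] at hx
  obtain ⟨y, hy, rfl⟩ := hx
  exact hX y (hlX y hy)

theorem wordLength_inv (hX : ∀ x ∈ X, x⁻¹ ∈ X) {g : G} (hg : g ∈ Subgroup.closure X) :
    wordLength X g⁻¹ = wordLength X g :=
  (wordLength_inv_le hX hg).antisymm
    (by simpa using wordLength_inv_le hX (inv_mem hg))

theorem list_prod_mem_closure {l : List G} (hl : ∀ x ∈ l, x ∈ X) :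
    l.prod ∈ Subgroup.closure X :=
  Subgroup.list_prod_mem _ fun x hx => Subgroup.subset_closure (hl x hx)

theorem eq_one_of_wordLength_eq_zero (hX : ∀ x ∈ X, x⁻¹ ∈ X) {g : G}
    (hg : g ∈ Subgroup.closure X) (h : wordLength X g = 0) : g = 1 := by
  obtain ⟨l, hl, -, rfl⟩ := exists_geodesic_word hX hg
  rw [h, List.length_eq_zero_iff] at hl
  simp [hl]

theorem exists_wordLength_split (hX : ∀ x ∈ X, x⁻¹ ∈ X) {g : G} (hg : g ∈ Subgroup.closure X)
    {k : ℕ} (hk : k ≤ wordLength X g) :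
    ∃ z ∈ Subgroup.closure X, wordLength X z = k ∧ wordLength X (z⁻¹ * g) + k = wordLength X g := by
  obtain ⟨l, hl, hlX, rfl⟩ := exists_geodesic_word hX hg
  have ht : ∀ x ∈ l.take k, x ∈ X := fun x hx => hlX x (List.mem_of_mem_take hx)
  have hd : ∀ x ∈ l.drop k, x ∈ X := fun x hx => hlX x (List.mem_of_mem_drop hx)
  have hprod : (l.take k).prod⁻¹ * l.prod = (l.drop k).prod := by
    rw [← List.prod_take_mul_prod_drop l k]; group
  have h1 := wordLength_prod_le ht
  have h2 := wordLength_prod_le hd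
  have h3 := wordLength_mul_le hX (list_prod_mem_closure ht) (list_prod_mem_closure hd)
  rw [List.prod_take_mul_prod_drop] at h3
  rw [List.length_take] at h1
  rw [List.length_drop] at h2
  refine ⟨(l.take k).prod, list_prod_mem_closure ht, ?_, ?_⟩
  · omega
  · rw [hprod]; omega

theorem finite_wordLength_le (hfin : X.Finite) (hX : ∀ x ∈ X, x⁻¹ ∈ X) (n : ℕ) :
    {g : G | g ∈ Subgroup.closure X ∧ wordLength X g ≤ n}.Finite := by
  induction n with
  | zero =>
    refine (Set.finite_singleton (1 : G)).subset fun g hg => ?_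
    exact eq_one_of_wordLength_eq_zero hX hg.1 (Nat.le_zero.1 hg.2)
  | succ n ih =>
    refine (ih.union (ih.image2 (· * ·) hfin)).subset fun g hg => ?_
    by_cases h : wordLength X g ≤ n
    · exact Or.inl ⟨hg.1, h⟩
    · right
      obtain ⟨l, hl, hlX, rfl⟩ := exists_geodesic_word hX hg.1
      have hl' : l ≠ [] := by rintro rfl; rw [List.length_nil] at hl; omega
      refine ⟨l.dropLast.prod, ⟨?_, ?_⟩, l.getLast hl', hlX _ (List.getLast_mem hl'), ?_⟩
      · exact list_prod_mem_closure fun x hx => hlX x (List.mem_of_mem_dropLast hx)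
      · refine (wordLength_prod_le fun x hx => hlX x (List.mem_of_mem_dropLast hx)).trans ?_
        have := hg.2
        rw [List.length_dropLast]; omega
      · have := congrArg List.prod (List.dropLast_append_getLast hl')
        simpa using this

end WordLength

/-- `Side V i g`: the element `g` is a nonempty product of factors taken alternately from the two
subgroups `V true` and `V false`, none of them in the intersection, the first one from `V i`. -/
inductive Side {G : Type u} [Group G] (V : Bool → Subgroup G) : Bool → G → Prop
  | single {i : Bool} {a : G} : a ∈ V i → a ∉ V (!i) → Side V i a
  | cons {i : Bool} {a g : G} : a ∈ V i → a ∉ V (!i) → Side V (!i) g → Side V i (a * g)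

/-- An amalgamated product of two groups over an infinite cyclic subgroup `⟨c⟩`, together with
finite generating sets of the two factors for which the word metrics are roughly those of trees and
the powers of `c` form a geodesic line on both sides. The factor `V true` meets the conjugates of
`⟨c⟩` malnormally. -/
structure CyclicAmalgam (G : Type u) [Group G] where
  /-- The two factors. -/
  V : Bool → Subgroup G
  /-- The generator of the amalgamated subgroup. -/
  c : G
  /-- The generating sets of the factors. -/
  X : Bool → Set G
  /-- The tree length functions on the factors. -/
  ρ : Bool → G → ℕ
  /-- The scales that relate tree lengths to word lengths. -/
  L : Bool → ℕ
  L_pos : ∀ i, 0 < L i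
  mem_zpowers_c : ∀ g, g ∈ V true → g ∈ V false → g ∈ Subgroup.zpowers c
  X_finite : ∀ i, (X i).Finite
  X_inv : ∀ i, ∀ x ∈ X i, x⁻¹ ∈ X i
  closure_X : ∀ i, Subgroup.closure (X i) = V i
  sup_eq_top : V true ⊔ V false = ⊤
  c_mem_X : ∀ i, c ∈ X i
  side_disjoint : ∀ g, Side V true g → ¬ Side V false g
  side_not_mem : ∀ i g, Side V i g → g ∉ Subgroup.zpowers c
  wordLength_zpow : ∀ i (n : ℤ), wordLength (X i) (c ^ n) = n.natAbs
  ρ_hyp : ∀ i, ∀ x ∈ V i, ∀ y ∈ V i, ∀ z ∈ V i, ∀ w ∈ V i,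
    ρ i (x⁻¹ * z) + ρ i (y⁻¹ * w) ≤ ρ i (x⁻¹ * y) + ρ i (z⁻¹ * w) ∨
    ρ i (x⁻¹ * z) + ρ i (y⁻¹ * w) ≤ ρ i (y⁻¹ * z) + ρ i (x⁻¹ * w)
  ρ_le : ∀ i, ∀ g ∈ V i, ρ i g ≤ L i * wordLength (X i) g
  le_ρ : ∀ i, ∀ g ∈ V i, L i * wordLength (X i) g ≤ ρ i g + L i
  malnormal : ∀ b ∈ V true, ∀ n m : ℤ, n ≠ 0 → (m = n ∨ m = -n) →
    b * c ^ n * b⁻¹ = c ^ m → b ∈ V false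

namespace CyclicAmalgam

variable {G : Type u} [Group G] (S : CyclicAmalgam G)

/-- The amalgamated subgroup. -/
def C : Subgroup G := Subgroup.zpowers S.c

theorem c_mem_V (i : Bool) : S.c ∈ S.V i := by
  rw [← S.closure_X i]; exact Subgroup.subset_closure (S.c_mem_X i)

theorem C_le_V (i : Bool) : S.C ≤ S.V i :=
  Subgroup.zpowers_le.2 (S.c_mem_V i)

variable {S}

theorem mem_C_of_mem {i : Bool} {g : G} (h : g ∈ S.V i) (h' : g ∈ S.V (!i)) : g ∈ S.C := by
  cases i
  · exact S.mem_zpowers_c g h' h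
  · exact S.mem_zpowers_c g h h'

theorem _root_.Side.not_mem_C {i : Bool} {g : G} (h : Side S.V i g) : g ∉ S.C :=
  S.side_not_mem i g h

theorem _root_.Side.not_side {i : Bool} {g : G} (h : Side S.V i g) : ¬ Side S.V (!i) g := by
  cases i
  · exact fun h' => S.side_disjoint g h' h
  · exact S.side_disjoint g h

theorem _root_.Side.base_mul {i : Bool} {b g : G} (hb : b ∈ S.C) (h : Side S.V i g) :
    Side S.V i (b * g) := by
  cases h with
  | single ha ha' =>
    exact .single (mul_mem (S.C_le_V _ hb) ha)
      (by rwa [Subgroup.mul_mem_cancel_left _ (S.C_le_V _ hb)])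
  | cons ha ha' hg =>
    rw [← mul_assoc]
    exact .cons (mul_mem (S.C_le_V _ hb) ha)
      (by rwa [Subgroup.mul_mem_cancel_left _ (S.C_le_V _ hb)]) hg

theorem side_mul_of_mem {i : Bool} {a g : G} (ha : a ∈ S.V i) (ha' : a ∉ S.V (!i))
    (hg : g ∈ S.C ∨ Side S.V (!i) g) : Side S.V i (a * g) := by
  rcases hg with hg | hg
  · exact .single (mul_mem ha (S.C_le_V _ hg))
      (by rwa [Subgroup.mul_mem_cancel_right _ (S.C_le_V _ hg)])
  · exact .cons ha ha' hg

theorem _root_.Side.mul_mem {i j : Bool} {g x : G} (h : Side S.V i g) (hx : x ∈ S.V j) :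
    Side S.V i (g * x) ∨ g * x ∈ S.C := by
  induction h with
  | @single i a ha ha' =>
    by_cases hxi : x ∈ S.V i
    · by_cases hm : a * x ∈ S.V (!i)
      · exact Or.inr (mem_C_of_mem (Subgroup.mul_mem _ ha hxi) hm)
      · exact Or.inl (.single (Subgroup.mul_mem _ ha hxi) hm)
    · have hj : j = !i := by
        cases i <;> cases j <;> simp_all
      subst hj
      exact Or.inl (.cons ha ha' (.single hx (by simpa using hxi)))
  | @cons i a g ha ha' hg ih =>
    left
    rw [mul_assoc]
    exact side_mul_of_mem ha ha' ih.symm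

theorem mem_C_or_side_of_mem {i : Bool} {a : G} (ha : a ∈ S.V i) : a ∈ S.C ∨ Side S.V i a := by
  by_cases h : a ∈ S.V (!i)
  · exact Or.inl (mem_C_of_mem ha h)
  · exact Or.inr (.single ha h)

theorem mem_C_or_side (i : Bool) (g : G) : g ∈ S.C ∨ Side S.V i g ∨ Side S.V (!i) g := by
  suffices h : g ∈ S.C ∨ ∃ j, Side S.V j g by
    rcases h with h | ⟨j, h⟩
    · exact Or.inl h
    · right; cases i <;> cases j <;> simp_all
  have hg : g ∈ S.V true ⊔ S.V false := by rw [S.sup_eq_top]; trivial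
  rw [Subgroup.sup_eq_closure] at hg
  induction hg using Subgroup.closure_induction_right with
  | one => exact Or.inl (one_mem _)
  | mul_right x hx y hy ih =>
    have : ∃ j, y ∈ S.V j := hy.elim (fun h => ⟨_, h⟩) (fun h => ⟨_, h⟩)
    obtain ⟨j, hyj⟩ := this
    rcases ih with h | ⟨k, h⟩
    · exact (mem_C_or_side_of_mem (Subgroup.mul_mem _ (S.C_le_V j h) hyj)).imp_right fun h => ⟨_, h⟩
    · exact (h.mul_mem hyj).symm.imp_right fun h => ⟨_, h⟩
  | mul_inv_cancel x hx y hy ih =>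
    have : ∃ j, y⁻¹ ∈ S.V j := hy.elim (fun h => ⟨_, inv_mem h⟩) (fun h => ⟨_, inv_mem h⟩)
    obtain ⟨j, hyj⟩ := this
    rcases ih with h | ⟨k, h⟩
    · exact (mem_C_or_side_of_mem (Subgroup.mul_mem _ (S.C_le_V j h) hyj)).imp_right fun h => ⟨_, h⟩
    · exact (h.mul_mem hyj).symm.imp_right fun h => ⟨_, h⟩

/-- Every element lies beyond some coset `a⟨c⟩` with `a ∈ V i`, as seen from `V i`. -/
theorem exists_direction (i : Bool) (g : G) :
    ∃ a ∈ S.V i, a⁻¹ * g ∈ S.C ∨ Side S.V (!i) (a⁻¹ * g) := by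
  rcases mem_C_or_side (S := S) i g with h | h | h
  · exact ⟨1, one_mem _, by simpa using Or.inl h⟩
  · cases h with
    | single ha ha' => exact ⟨g, ha, by simp [one_mem]⟩
    | @cons _ a r ha ha' hr => exact ⟨a, ha, by simpa using Or.inr hr⟩
  · exact ⟨1, one_mem _, by simpa using Or.inr h⟩

variable (S) in
/-- The union of the two generating sets. -/
def gens : Set G := S.X true ∪ S.X false

theorem mem_gens {x : G} : x ∈ S.gens ↔ ∃ i, x ∈ S.X i := by
  simp [gens, or_comm]

theorem X_subset_V (i : Bool) : S.X i ⊆ S.V i := by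
  rw [← S.closure_X i]; exact Subgroup.subset_closure

theorem gens_inv : ∀ x ∈ S.gens, x⁻¹ ∈ S.gens := by
  intro x hx
  obtain ⟨i, hi⟩ := mem_gens.1 hx
  exact mem_gens.2 ⟨i, S.X_inv i x hi⟩

theorem gens_finite : S.gens.Finite := (S.X_finite _).union (S.X_finite _)

theorem closure_gens : Subgroup.closure S.gens = ⊤ := by
  rw [gens, Subgroup.closure_union, S.closure_X, S.closure_X, S.sup_eq_top]

theorem isSymmGen_gens : IsSymmGen S.gens := ⟨gens_finite, gens_inv, closure_gens⟩

theorem mem_closure_gens (g : G) : g ∈ Subgroup.closure S.gens := by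
  rw [closure_gens]; trivial

/-- A path that leads from one side of the coset `⟨c⟩` to the other one meets it. -/
theorem exists_append_mem_C {i : Bool} {l : List G} (hl : ∀ y ∈ l, ∃ j, y ∈ S.V j) {x : G}
    (hx : x ∈ S.C ∨ Side S.V i x) (hxl : x * l.prod ∈ S.C ∨ Side S.V (!i) (x * l.prod)) :
    ∃ l₁ l₂, l = l₁ ++ l₂ ∧ x * l₁.prod ∈ S.C := by
  induction l generalizing x with
  | nil =>
    refine ⟨[], [], rfl, ?_⟩
    simp only [List.prod_nil, mul_one] at hxl ⊢
    rcases hx with hx | hx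
    · exact hx
    · exact hxl.resolve_right hx.not_side
  | cons y l ih =>
    rcases hx with hx | hx
    · exact ⟨[], y :: l, rfl, by simpa using hx⟩
    · obtain ⟨j, hj⟩ := hl y (by simp)
      obtain ⟨l₁, l₂, rfl, h⟩ := ih (x := x * y) (fun z hz => hl z (by simp [hz]))
        (hx.mul_mem hj).symm (by simpa [mul_assoc] using hxl)
      exact ⟨y :: l₁, l₂, rfl, by simpa [mul_assoc] using h⟩

theorem wordLength_eq_of_mem_C {i j : Bool} {g : G} (hg : g ∈ S.C) :
    wordLength (S.X i) g = wordLength (S.X j) g := by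
  obtain ⟨n, rfl⟩ := hg
  exact (S.wordLength_zpow i n).trans (S.wordLength_zpow j n).symm

theorem mul_le_wordLength {i : Bool} {g h : G} (hg : g ∈ S.V i) (hh : h ∈ S.V i) :
    wordLength (S.X i) (g * h) ≤ wordLength (S.X i) g + wordLength (S.X i) h :=
  wordLength_mul_le (S.X_inv i) (by rwa [S.closure_X]) (by rwa [S.closure_X])

theorem wordLength_X_prod_le (n : ℕ) : ∀ (i : Bool) (l : List G), l.length ≤ n →
    (∀ y ∈ l, y ∈ S.gens) → l.prod ∈ S.V i → wordLength (S.X i) l.prod ≤ l.length := by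
  induction n with
  | zero =>
    intro i l hl _ _
    rw [List.length_eq_zero_iff.1 (Nat.le_zero.1 hl)]
    simp [wordLength_one]
  | succ n ih =>
    intro i l hl hly hlV
    cases l with
    | nil => simp [wordLength_one]
    | cons y l =>
      rw [List.length_cons] at hl
      obtain ⟨j, hj⟩ := mem_gens.1 (hly y (by simp))
      rw [List.prod_cons] at hlV ⊢
      by_cases hyi : y ∈ S.V i
      · have h1 : wordLength (S.X i) y ≤ 1 := by
          by_cases hij : i = j
          · subst hij; exact wordLength_le_one hj
          · have hj' : j = !i := by cases i <;> cases j <;> simp_all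
            subst hj'
            rw [wordLength_eq_of_mem_C (j := !i) (mem_C_of_mem hyi (X_subset_V _ hj))]
            exact wordLength_le_one hj
        have hlV' : l.prod ∈ S.V i := (Subgroup.mul_mem_cancel_left _ hyi).1 hlV
        have h2 := ih i l (by omega) (fun z hz => hly z (by simp [hz])) hlV'
        have h3 := mul_le_wordLength hyi hlV'
        simp only [List.length_cons]; omega
      · have hj' : i = !j := by
          have := X_subset_V _ hj
          cases i <;> cases j <;> simp_all
        subst hj'
        have hyj := X_subset_V _ hj
        obtain ⟨l₁, l₂, rfl, h⟩ := exists_append_mem_C (S := S) (i := j) (x := y) (l := l)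
          (fun z hz => (mem_gens.1 (hly z (by simp [hz]))).imp fun k hk => X_subset_V k hk)
          (Or.inr (.single hyj hyi)) (mem_C_or_side_of_mem hlV)
        simp only [List.length_append, List.prod_append] at *
        have h1 : l₁.prod ∈ S.V j :=
          (Subgroup.mul_mem_cancel_left _ hyj).1 (S.C_le_V _ h)
        have h2 : l₂.prod ∈ S.V (!j) := by
          rw [← mul_assoc] at hlV
          exact (Subgroup.mul_mem_cancel_left _ (S.C_le_V _ h)).1 hlV
        have h3 := ih j l₁ (by omega) (fun z hz => hly z (by simp [hz])) h1
        have h4 := ih (!j) l₂ (by omega) (fun z hz => hly z (by simp [hz])) h2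
        have h5 := mul_le_wordLength hyj h1
        have h6 := mul_le_wordLength (S.C_le_V (!j) h) h2
        rw [wordLength_eq_of_mem_C (j := j) h, mul_assoc] at h6
        have h7 : wordLength (S.X j) y ≤ 1 := wordLength_le_one hj
        simp only [List.length_cons, List.length_append]
        omega

theorem wordLength_gens_eq {i : Bool} {g : G} (hg : g ∈ S.V i) :
    wordLength S.gens g = wordLength (S.X i) g := by
  apply le_antisymm
  · obtain ⟨l, hl, hlX, rfl⟩ := exists_geodesic_word (S.X_inv i) (by rwa [S.closure_X] : g ∈ _)
    rw [← hl]
    exact wordLength_prod_le fun x hx => mem_gens.2 ⟨i, hlX x hx⟩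
  · obtain ⟨l, hl, hlX, rfl⟩ := exists_geodesic_word gens_inv (mem_closure_gens (S := S) g)
    rw [← hl]
    exact wordLength_X_prod_le _ i l le_rfl hlX hg

variable (S) in
/-- The word metric of the amalgam. -/
noncomputable def d (x y : G) : ℕ := wordDist S.gens x y

theorem d_mul_left (g x y : G) : S.d (g * x) (g * y) = S.d x y := by
  simp [d, wordDist, mul_assoc]

theorem d_self (x : G) : S.d x x = 0 := by simp [d, wordDist, wordLength_one]

theorem d_comm (x y : G) : S.d x y = S.d y x := by
  rw [d, d, wordDist, wordDist, ← wordLength_inv gens_inv (mem_closure_gens _)]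
  simp

theorem d_triangle (x y z : G) : S.d x z ≤ S.d x y + S.d y z := by
  have := wordLength_mul_le (X := S.gens) gens_inv (mem_closure_gens (x⁻¹ * y))
    (mem_closure_gens (y⁻¹ * z))
  simpa [d, wordDist, mul_assoc] using this

theorem d_eq_zero {x y : G} (h : S.d x y = 0) : x = y := by
  have := eq_one_of_wordLength_eq_zero gens_inv (mem_closure_gens (S := S) _) h
  exact (inv_mul_eq_one.1 this)

theorem finite_ball (x : G) (n : ℕ) : {y | S.d x y ≤ n}.Finite := by
  refine ((finite_wordLength_le gens_finite gens_inv n).image (x * ·) :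
    Set.Finite ((x * ·) '' {g | g ∈ Subgroup.closure S.gens ∧ _})).subset fun y hy => ?_
  exact ⟨x⁻¹ * y, ⟨mem_closure_gens _, hy⟩, by simp⟩

theorem d_zpow (g : G) (m n : ℤ) : S.d (g * S.c ^ m) (g * S.c ^ n) = (n - m).natAbs := by
  have h : (g * S.c ^ m)⁻¹ * (g * S.c ^ n) = S.c ^ (n - m) := by
    rw [zpow_sub]; group
  rw [d, wordDist, h, wordLength_gens_eq (i := true), S.wordLength_zpow]
  exact zpow_mem (S.c_mem_V _) _

/-- A coset of `⟨c⟩` that separates two points contains a point of a geodesic between them. -/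
theorem exists_d_add_eq {i : Bool} {g x y : G}
    (hx : g⁻¹ * x ∈ S.C ∨ Side S.V i (g⁻¹ * x))
    (hy : g⁻¹ * y ∈ S.C ∨ Side S.V (!i) (g⁻¹ * y)) :
    ∃ q, g⁻¹ * q ∈ S.C ∧ S.d x y = S.d x q + S.d q y := by
  obtain ⟨l, hl, hlX, hlp⟩ := exists_geodesic_word gens_inv (mem_closure_gens (S := S) (x⁻¹ * y))
  obtain ⟨l₁, l₂, rfl, h⟩ := exists_append_mem_C (l := l) (x := g⁻¹ * x)
    (fun z hz => (mem_gens.1 (hlX z hz)).imp fun k hk => X_subset_V k hk) hx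
    (by rw [hlp]; simpa [mul_assoc] using hy)
  refine ⟨x * l₁.prod, by simpa [mul_assoc] using h, le_antisymm (d_triangle _ _ _) ?_⟩
  have h1 : S.d x (x * l₁.prod) ≤ l₁.length := by
    simpa [d, wordDist] using
      wordLength_prod_le (X := S.gens) fun z hz => hlX z (List.mem_append_left _ hz)
  have h2 : S.d (x * l₁.prod) y ≤ l₂.length := by
    have : (x * l₁.prod)⁻¹ * y = l₂.prod := by
      rw [List.prod_append] at hlp
      rw [mul_inv_rev, mul_assoc, ← hlp]; group
    rw [d, wordDist, this]
    exact wordLength_prod_le (X := S.gens) fun z hz => hlX z (List.mem_append_right _ hz)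
  have h3 : S.d x y = l₁.length + l₂.length := by
    rw [← List.length_append, hl]; rfl
  omega

theorem exists_between {i : Bool} {x y : G} (h : x⁻¹ * y ∈ S.V i) {k : ℕ} (hk : k ≤ S.d x y) :
    ∃ z, x⁻¹ * z ∈ S.V i ∧ S.d x z = k ∧ S.d z y + k = S.d x y := by
  rw [d, wordDist, wordLength_gens_eq h] at hk
  obtain ⟨z, hz, hzk, hzy⟩ := exists_wordLength_split (S.X_inv i) (by rwa [S.closure_X]) hk
  rw [S.closure_X] at hz
  refine ⟨x * z, by simpa using hz, ?_, ?_⟩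
  · rw [d, wordDist, inv_mul_cancel_left, wordLength_gens_eq hz, hzk]
  · have h2 : (x * z)⁻¹ * y = z⁻¹ * (x⁻¹ * y) := by group
    rw [d, d, wordDist, wordDist, wordLength_gens_eq h, h2,
      wordLength_gens_eq (mul_mem (inv_mem hz) h), hzy]

theorem ρ_le_d {i : Bool} {x y : G} (h : x⁻¹ * y ∈ S.V i) :
    S.ρ i (x⁻¹ * y) ≤ S.L i * S.d x y := by
  rw [d, wordDist, wordLength_gens_eq h]; exact S.ρ_le i _ h

theorem d_le_ρ {i : Bool} {x y : G} (h : x⁻¹ * y ∈ S.V i) :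
    S.L i * S.d x y ≤ S.ρ i (x⁻¹ * y) + S.L i := by
  rw [d, wordDist, wordLength_gens_eq h]; exact S.le_ρ i _ h

theorem inv_mul_mem_of {i : Bool} {o x y : G} (hx : o⁻¹ * x ∈ S.V i) (hy : o⁻¹ * y ∈ S.V i) :
    x⁻¹ * y ∈ S.V i := by
  have := mul_mem (inv_mem hx) hy
  simpa [mul_assoc] using this

theorem ρ_four_point {i : Bool} {o x y z w : G} (hx : o⁻¹ * x ∈ S.V i) (hy : o⁻¹ * y ∈ S.V i)
    (hz : o⁻¹ * z ∈ S.V i) (hw : o⁻¹ * w ∈ S.V i) :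
    S.ρ i (x⁻¹ * z) + S.ρ i (y⁻¹ * w) ≤ S.ρ i (x⁻¹ * y) + S.ρ i (z⁻¹ * w) ∨
    S.ρ i (x⁻¹ * z) + S.ρ i (y⁻¹ * w) ≤ S.ρ i (y⁻¹ * z) + S.ρ i (x⁻¹ * w) := by
  simpa [mul_assoc] using S.ρ_hyp i _ hx _ hy _ hz _ hw

/-- The four-point inequality in a coset of a factor. -/
theorem four_point {i : Bool} {o x y z w : G} (hx : o⁻¹ * x ∈ S.V i) (hy : o⁻¹ * y ∈ S.V i)
    (hz : o⁻¹ * z ∈ S.V i) (hw : o⁻¹ * w ∈ S.V i) :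
    S.d x z + S.d y w ≤ S.d x y + S.d z w + 2 ∨ S.d x z + S.d y w ≤ S.d y z + S.d x w + 2 := by
  have h1 := d_le_ρ (inv_mul_mem_of hx hz)
  have h2 := d_le_ρ (inv_mul_mem_of hy hw)
  have hL := S.L_pos i
  refine (ρ_four_point hx hy hz hw).imp (fun h => ?_) fun h => ?_
  · have h3 := ρ_le_d (inv_mul_mem_of hx hy)
    have h4 := ρ_le_d (inv_mul_mem_of hz hw)
    refine le_of_mul_le_mul_left (?_ : S.L i * _ ≤ S.L i * _) hL
    linarith
  · have h3 := ρ_le_d (inv_mul_mem_of hy hz)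
    have h4 := ρ_le_d (inv_mul_mem_of hx hw)
    refine le_of_mul_le_mul_left (?_ : S.L i * _ ≤ S.L i * _) hL
    linarith

end CyclicAmalgam

namespace CyclicAmalgam

variable {G : Type u} [Group G] {S : CyclicAmalgam G}

theorem coset_trans {K : Subgroup G} {x y z : G} (h : x⁻¹ * y ∈ K) (h' : y⁻¹ * z ∈ K) :
    x⁻¹ * z ∈ K := by
  simpa [mul_assoc] using K.mul_mem h h'

theorem coset_symm {K : Subgroup G} {x y : G} (h : x⁻¹ * y ∈ K) : y⁻¹ * x ∈ K := by
  simpa using K.inv_mem h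

theorem coset_C_le_V {i : Bool} {x y : G} (h : x⁻¹ * y ∈ S.C) : x⁻¹ * y ∈ S.V i :=
  S.C_le_V i h

theorem exists_eq_mul_zpow {x y : G} (h : x⁻¹ * y ∈ S.C) : ∃ n : ℤ, y = x * S.c ^ n := by
  obtain ⟨n, hn⟩ := h
  exact ⟨n, by rw [show S.c ^ n = x⁻¹ * y from hn]; group⟩

theorem inv_mul_mul_zpow_mem (x : G) (n : ℤ) : x⁻¹ * (x * S.c ^ n) ∈ S.C := by
  rw [inv_mul_cancel_left]; exact Subgroup.zpow_mem _ (Subgroup.mem_zpowers _) n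

/-- The coset `p⟨c⟩` is a geodesic line. -/
theorem exists_direction_zpow {p q : G} (h : p⁻¹ * q ∈ S.C) :
    ∃ ε : ℤ, (ε = 1 ∨ ε = -1) ∧ ∀ k : ℕ, k ≤ S.d p q →
      S.d p (p * S.c ^ (ε * k)) = k ∧ S.d (p * S.c ^ (ε * k)) q + k = S.d p q := by
  obtain ⟨n, rfl⟩ := exists_eq_mul_zpow h
  have hd : S.d p (p * S.c ^ n) = n.natAbs := by
    simpa using d_zpow (S := S) p 0 n
  have key : ∀ m : ℤ, S.d p (p * S.c ^ m) = m.natAbs := fun m => by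
    simpa using d_zpow (S := S) p 0 m
  rcases le_total 0 n with hn | hn
  · refine ⟨1, Or.inl rfl, fun k hk => ⟨?_, ?_⟩⟩
    · rw [key]; omega
    · rw [d_zpow, hd]; omega
  · refine ⟨-1, Or.inr rfl, fun k hk => ⟨?_, ?_⟩⟩
    · rw [key]; omega
    · rw [d_zpow, hd]; omega

variable (S) in
/-- `p` is a coarse nearest point projection of `x` to the coset `oK`. -/
def IsGate (K : Subgroup G) (κ : ℕ) (o x p : G) : Prop :=
  o⁻¹ * p ∈ K ∧ ∀ y, o⁻¹ * y ∈ K → S.d x p + S.d p y ≤ S.d x y + κ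

theorem IsGate.d_le {K : Subgroup G} {κ : ℕ} {o x p p' : G} (h : S.IsGate K κ o x p)
    (h' : S.IsGate K κ o x p') : S.d p p' ≤ κ := by
  have h1 := h.2 p' h'.1
  have h2 := h'.2 p h.1
  rw [d_comm p' p] at h2
  omega

theorem IsGate.mono {K : Subgroup G} {κ κ' : ℕ} {o x p : G} (h : S.IsGate K κ o x p)
    (hκ : κ ≤ κ') : S.IsGate K κ' o x p :=
  ⟨h.1, fun y hy => (h.2 y hy).trans (by omega)⟩

theorem IsGate.change_base {K : Subgroup G} {κ : ℕ} {o o' x p : G} (h : S.IsGate K κ o x p)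
    (ho : o'⁻¹ * o ∈ K) : S.IsGate K κ o' x p :=
  ⟨coset_trans ho h.1, fun y hy => h.2 y (coset_trans (coset_symm ho) hy)⟩

/-- Points of a coset of a factor project to the cosets of `⟨c⟩` in it. -/
theorem exists_gate_of_mem {i : Bool} {o x : G} (hx : o⁻¹ * x ∈ S.V i) :
    ∃ p, S.IsGate S.C 5 o x p := by
  let f : ℤ → ℕ := fun n => S.d x (o * S.c ^ n)
  have hmin : ∀ q, o⁻¹ * q ∈ S.C → S.d x (o * S.c ^ Function.argmin f) ≤ S.d x q := by
    intro q hq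
    obtain ⟨n, rfl⟩ := exists_eq_mul_zpow hq
    exact Function.argmin_le f n
  generalize Function.argmin f = n at hmin
  have hp := inv_mul_mul_zpow_mem (S := S) o n
  generalize o * S.c ^ n = p at hmin hp
  refine ⟨p, hp, fun q hq => ?_⟩
  obtain ⟨ε, -, hε⟩ := exists_direction_zpow (coset_trans (coset_symm hp) hq)
  have h1 := hmin q hq
  by_cases h3 : 3 ≤ S.d p q
  · obtain ⟨h4, h5⟩ := hε 3 h3
    have h6 := coset_trans hp (inv_mul_mul_zpow_mem p (ε * (3 : ℕ)))
    generalize p * S.c ^ (ε * (3 : ℕ)) = m at h4 h5 h6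
    have h7 := hmin m h6
    have h8 := four_point hx (coset_C_le_V (i := i) hp) (coset_C_le_V h6) (coset_C_le_V hq)
    omega
  · omega

/-- Either two projections are close, or a geodesic passes through both of them. -/
theorem gate_dichotomy {i : Bool} {o x y p q : G} (hx : o⁻¹ * x ∈ S.V i) (hy : o⁻¹ * y ∈ S.V i)
    (hp : S.IsGate S.C 5 o x p) (hq : S.IsGate S.C 5 o y q) :
    S.d p q ≤ 6 ∨ S.d x p + S.d p q + S.d q y ≤ S.d x y + 12 := by
  have h1 := hp.2 q hq.1
  have h2 := hq.2 p hp.1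
  have h3 := four_point hx hy (coset_C_le_V (i := i) hq.1) (coset_C_le_V hp.1)
  rw [d_comm q p] at *
  rw [d_comm q y] at *
  omega

/-- Parallel segments of cosets of `⟨c⟩` in a coset of a factor. -/
theorem parallel_points {i : Bool} {o y y' p p' q r : G} {t : ℕ} (hy : o⁻¹ * y ∈ S.V i)
    (hy' : o⁻¹ * y' ∈ S.V i) (hq : o⁻¹ * q ∈ S.V i) (hr : o⁻¹ * r ∈ S.V i)
    (h : S.d y p + S.d p p' + S.d p' y' ≤ S.d y y' + 12)
    (hq1 : S.d p q = t) (hq2 : S.d q p' + t = S.d p p')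
    (hr1 : S.d y r = S.d y p + t) (hr2 : S.d r y' + (S.d y p + t) = S.d y y') :
    S.d r q ≤ 14 := by
  have h1 := four_point hy hq hy' hr
  have h2 := d_triangle (S := S) y p q
  have h3 := d_triangle (S := S) q p' y'
  have h4 := d_comm (S := S) r q
  have h5 := d_comm (S := S) r y'
  omega

/-- Distinct cosets of `⟨c⟩` in a coset of the malnormal factor are not parallel for long. -/
theorem exists_parallel_bound : ∃ N, ∀ o o' y y' p p' : G, o⁻¹ * o' ∈ S.V true →
    o⁻¹ * o' ∉ S.C → o'⁻¹ * y ∈ S.C → o'⁻¹ * y' ∈ S.C → S.IsGate S.C 5 o y p →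
    S.IsGate S.C 5 o y' p' → S.d p p' ≤ N := by
  have hfin := finite_ball (S := S) 1 14
  refine ⟨hfin.toFinset.card + 13, fun o o' y y' p p' ho hoC hy hy' hp hp' => ?_⟩
  by_contra! hN
  have hyo : o⁻¹ * y ∈ S.V true := coset_trans ho (coset_C_le_V hy)
  have hyo' : o⁻¹ * y' ∈ S.V true := coset_trans ho (coset_C_le_V hy')
  have hpass := (gate_dichotomy hyo hyo' hp hp').resolve_left (by omega)
  obtain ⟨ε, hε, hε'⟩ := exists_direction_zpow (coset_trans (coset_symm hp.1) hp'.1)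
  obtain ⟨η, hη, hη'⟩ := exists_direction_zpow (coset_trans (coset_symm hy) hy')
  set n := hfin.toFinset.card with hn
  let g : ℕ → G := fun t => (y * S.c ^ (η * (S.d y p + t : ℕ)))⁻¹ * (p * S.c ^ (ε * (t : ℕ)))
  have hmaps : ∀ t ∈ Finset.range (n + 1), g t ∈ hfin.toFinset := by
    intro t ht
    rw [Finset.mem_range] at ht
    obtain ⟨h1, h2⟩ := hε' t (by omega)
    obtain ⟨h3, h4⟩ := hη' (S.d y p + t) (by omega)
    have := parallel_points hyo hyo'
      (coset_trans (coset_C_le_V hp.1) (coset_C_le_V (inv_mul_mul_zpow_mem p _)))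
      (coset_trans hyo (coset_C_le_V (inv_mul_mul_zpow_mem y _))) hpass h1 h2 h3 h4
    rw [Set.Finite.mem_toFinset, Set.mem_ofPred_eq]
    simpa [d, wordDist, g] using this
  obtain ⟨t, -, s, -, hts, hgts⟩ := Finset.exists_ne_map_eq_of_card_lt_of_maps_to
    (s := Finset.range (n + 1)) (t := hfin.toFinset) (by simp [hn]) hmaps
  have hgV : g t ∈ S.V true :=
    coset_trans (x := y * S.c ^ (η * (S.d y p + t : ℕ))) (y := o)
      (coset_symm (coset_trans hyo (coset_C_le_V (inv_mul_mul_zpow_mem y _))))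
      (coset_trans (coset_C_le_V hp.1) (coset_C_le_V (inv_mul_mul_zpow_mem p _)))
  have hrel : g s = S.c ^ (-(η * ((s : ℤ) - t))) * g t * S.c ^ (ε * ((s : ℤ) - t)) := by
    have e1 : y * S.c ^ (η * (S.d y p + s : ℕ)) =
        y * S.c ^ (η * (S.d y p + t : ℕ)) * S.c ^ (η * ((s : ℤ) - t)) := by
      rw [mul_assoc, ← zpow_add]; congr 2; push_cast; ring
    have e2 : p * S.c ^ (ε * (s : ℤ)) = p * S.c ^ (ε * (t : ℤ)) * S.c ^ (ε * ((s : ℤ) - t)) := by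
      rw [mul_assoc, ← zpow_add]; congr 2; ring
    simp only [g]
    rw [e1, e2, zpow_neg]
    simp only [mul_inv_rev, mul_assoc]
  rw [← hgts] at hrel
  have hne : ((s : ℤ) - t) ≠ 0 := by omega
  have hconj : g t * S.c ^ (ε * ((s : ℤ) - t)) * (g t)⁻¹ = S.c ^ (η * ((s : ℤ) - t)) := by
    rw [mul_inv_eq_iff_eq_mul]
    nth_rewrite 2 [hrel]
    rw [zpow_neg]; simp only [mul_assoc, mul_inv_cancel_left]
  have hgC : g t ∈ S.C := by
    refine mem_C_of_mem (i := true) hgV (S.malnormal _ hgV _ _ ?_ ?_ hconj)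
    · rcases hε with rfl | rfl <;> omega
    · rcases hε with rfl | rfl <;> rcases hη with rfl | rfl <;> simp
  apply hoC
  have h1 : o'⁻¹ * (p * S.c ^ (ε * (t : ℕ))) ∈ S.C :=
    coset_trans (coset_trans hy (inv_mul_mul_zpow_mem y _)) hgC
  exact coset_symm (coset_trans h1 (coset_symm (coset_trans hp.1 (inv_mul_mul_zpow_mem p _))))

/-- The projection of a coset of `⟨c⟩` in the malnormal factor to another one is bounded. -/
theorem exists_coset_projection : ∃ κ, ∀ o o' : G, o⁻¹ * o' ∈ S.V true → o⁻¹ * o' ∉ S.C →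
    ∃ p, o⁻¹ * p ∈ S.C ∧ ∀ q' q, o'⁻¹ * q' ∈ S.C → o⁻¹ * q ∈ S.C →
      S.d q' p + S.d p q ≤ S.d q' q + κ := by
  obtain ⟨N, hN⟩ := exists_parallel_bound (S := S)
  refine ⟨5 + 2 * N, fun o o' ho hoC => ?_⟩
  obtain ⟨p, hp⟩ := exists_gate_of_mem ho
  refine ⟨p, hp.1, fun q' q hq' hq => ?_⟩
  obtain ⟨p', hp'⟩ := exists_gate_of_mem (coset_trans ho (coset_C_le_V hq'))
  have h1 := hN o o' o' q' p p' ho hoC (by simp [S.C.one_mem]) hq' hp hp'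
  have h2 := hp'.2 q hq
  have h3 := d_triangle (S := S) q' p' p
  have h4 := d_triangle (S := S) p p' q
  rw [d_comm p' p] at h3
  omega

variable (S) in
/-- `x` lies in `e⟨c⟩` or beyond it, on the side that starts with the factor `V j`. -/
def Beyond (j : Bool) (e x : G) : Prop := e⁻¹ * x ∈ S.C ∨ Side S.V j (e⁻¹ * x)

theorem Beyond.change_base {j : Bool} {e e' x : G} (h : S.Beyond j e x) (he : e'⁻¹ * e ∈ S.C) :
    S.Beyond j e' x := by
  refine h.imp (fun h => coset_trans he h) fun h => ?_
  simpa [mul_assoc] using h.base_mul he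

theorem Beyond.mul {i : Bool} {e e' x : G} (h : S.Beyond (!i) e x) (he : e'⁻¹ * e ∈ S.V i)
    (he' : e'⁻¹ * e ∉ S.C) : Side S.V i (e'⁻¹ * x) := by
  have := side_mul_of_mem he (fun h => he' (mem_C_of_mem he h)) h
  simpa [mul_assoc] using this

theorem beyond_of_mem {i : Bool} {e x : G} (h : e⁻¹ * x ∈ S.V i) : S.Beyond i e x :=
  mem_C_or_side_of_mem h

theorem Beyond.exists_d_add_eq {i : Bool} {e x y : G} (hx : S.Beyond (!i) e x)
    (hy : S.Beyond i e y) : ∃ q, e⁻¹ * q ∈ S.C ∧ S.d x y = S.d x q + S.d q y :=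
  CyclicAmalgam.exists_d_add_eq hx (by simpa [Beyond] using hy)

/-- A projection to a coset of `⟨c⟩` is a projection to the adjacent coset of a factor. -/
theorem IsGate.of_beyond {i : Bool} {κ : ℕ} {o e x p : G} (h : S.IsGate S.C κ e x p)
    (he : o⁻¹ * e ∈ S.V i) (hx : S.Beyond (!i) e x) : S.IsGate (S.V i) κ o x p := by
  refine ⟨coset_trans he (coset_C_le_V h.1), fun y hy => ?_⟩
  obtain ⟨q, hq, hd⟩ := hx.exists_d_add_eq (beyond_of_mem (coset_trans (coset_symm he) hy))
  have h1 := h.2 q hq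
  have h2 := d_triangle (S := S) p q y
  omega

theorem IsGate.comp {i : Bool} {κ κ' : ℕ} {o x p q : G} (h : S.IsGate (S.V i) κ o x p)
    (h' : S.IsGate S.C κ' o p q) : S.IsGate S.C (κ + κ') o x q := by
  refine ⟨h'.1, fun y hy => ?_⟩
  have h1 := h.2 y (coset_C_le_V hy)
  have h2 := h'.2 y hy
  have h3 := d_triangle (S := S) x p q
  omega

theorem exists_adjacent (i : Bool) (o x : G) :
    ∃ e, o⁻¹ * e ∈ S.V i ∧ S.Beyond (!i) e x := by
  obtain ⟨a, ha, h⟩ := exists_direction (S := S) i (o⁻¹ * x)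
  exact ⟨o * a, by simpa using ha, by simpa [Beyond, mul_assoc] using h⟩

theorem exists_gate_of_dir {κ : ℕ} (hκ : ∀ o o' : G, o⁻¹ * o' ∈ S.V true → o⁻¹ * o' ∉ S.C →
      ∃ p, o⁻¹ * p ∈ S.C ∧ ∀ q' q, o'⁻¹ * q' ∈ S.C → o⁻¹ * q ∈ S.C →
      S.d q' p + S.d p q ≤ S.d q' q + κ) {o e : G} (he : o⁻¹ * e ∈ S.V true)
    (heC : o⁻¹ * e ∉ S.C) :
    ∃ p, ∀ x, S.Beyond false e x → S.IsGate S.C κ o x p := by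
  obtain ⟨p, hp, h⟩ := hκ o e he heC
  refine ⟨p, fun x hx => ⟨hp, fun q hq => ?_⟩⟩
  obtain ⟨q', hq', hd⟩ := hx.exists_d_add_eq (i := true)
    (beyond_of_mem (coset_trans (coset_symm he) (coset_C_le_V hq)))
  have h1 := h q' q hq' hq
  have h2 := d_triangle (S := S) x q' p
  omega

variable (S) in
/-- All points beyond a coset of `⟨c⟩` project to it. -/
theorem exists_gate_const : ∃ κ, ∀ j o x, S.Beyond j o x → ∃ p, S.IsGate S.C κ o x p := by
  obtain ⟨κ, hκ⟩ := exists_coset_projection (S := S)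
  have hB : ∀ o x, S.Beyond true o x → ∃ p, S.IsGate S.C (κ + 5) o x p := by
    intro o x hx
    obtain ⟨e, he, hex⟩ := exists_adjacent (S := S) true o x
    by_cases heC : o⁻¹ * e ∈ S.C
    · have hxo : o⁻¹ * x ∈ S.C := by
        rcases hx with hx | hx
        · exact hx
        · exact (hex.change_base heC).resolve_right hx.not_side
      exact ⟨x, hxo, fun y _ => by rw [d_self]; omega⟩
    · obtain ⟨p, hp⟩ := exists_gate_of_dir hκ he heC
      exact ⟨p, (hp x hex).mono (by omega)⟩
  refine ⟨κ + 5 + 5, fun j o x hx => ?_⟩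
  cases j
  · obtain ⟨e, he, hex⟩ := exists_adjacent (S := S) false o x
    obtain ⟨p, hp⟩ := hB e x hex
    have hp' := hp.of_beyond he hex
    obtain ⟨q, hq⟩ := exists_gate_of_mem hp'.1
    exact ⟨q, hp'.comp hq⟩
  · obtain ⟨p, hp⟩ := hB o x hx
    exact ⟨p, hp.mono (by omega)⟩

end CyclicAmalgam

namespace CyclicAmalgam

variable {G : Type u} [Group G] {S : CyclicAmalgam G}

variable (S) in
/-- A geodesic from `x` to `y` coarsely passes through `p` and `q`. -/
def Passes (κ : ℕ) (x p q y : G) : Prop := S.d x p + S.d p q + S.d q y ≤ S.d x y + κ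

theorem Passes.symm {κ : ℕ} {x p q y : G} (h : S.Passes κ x p q y) : S.Passes κ y q p x := by
  unfold Passes at *
  rw [d_comm y q, d_comm q p, d_comm p x, d_comm y x]
  omega

theorem Passes.mono {κ κ' : ℕ} {x p q y : G} (h : S.Passes κ x p q y) (hκ : κ ≤ κ') :
    S.Passes κ' x p q y :=
  le_trans h (by omega)

theorem passes_of_mem {K : Subgroup G} {κ : ℕ} {o x p q y : G} (hx : o⁻¹ * x ∈ K)
    (hp : S.IsGate K κ o x p) (hq : S.IsGate K κ o y q) : S.Passes (3 * κ) x p q y := by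
  have h1 := hp.2 x hx
  have h2 := hq.2 x hx
  have h3 := d_triangle (S := S) p x q
  rw [d_self] at h1
  rw [d_comm q x, d_comm y x, d_comm y q] at h2
  rw [d_comm p x] at *
  unfold Passes
  omega

theorem passes_of_ne {i : Bool} {κ : ℕ} {e e' x p q y : G} (he : e⁻¹ * e' ∈ S.V i)
    (heC : e⁻¹ * e' ∉ S.C) (hx : S.Beyond (!i) e x) (hy : S.Beyond (!i) e' y)
    (hp : S.IsGate S.C κ e x p) (hq : S.IsGate S.C κ e' y q) : S.Passes (3 * κ) x p q y := by
  obtain ⟨r, hr, hd⟩ := hx.exists_d_add_eq (Or.inr (hy.mul he heC))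
  have h1 := hp.2 r hr
  have h2 := (hq.of_beyond he hy).2 r (coset_C_le_V hr)
  have h3 := d_triangle (S := S) p r q
  rw [d_comm q r, d_comm y q, d_comm y r] at h2
  unfold Passes
  omega

/-- Projecting a pair of points of a coset of a factor further to a coset of `⟨c⟩`. -/
theorem dichotomy_of_project {i : Bool} {κ K : ℕ} {o z ζ p w ω q : G}
    (hζ : S.IsGate (S.V i) κ o z ζ) (hω : S.IsGate (S.V i) κ o w ω)
    (hp : S.IsGate S.C κ o z p) (hq : S.IsGate S.C κ o w q)
    (h : S.d ζ ω ≤ K ∨ S.Passes K z ζ ω w) :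
    S.d p q ≤ K + 8 * κ + 100 ∨ S.Passes (K + 8 * κ + 100) z p q w := by
  obtain ⟨p', hp'⟩ := exists_gate_of_mem hζ.1
  obtain ⟨q', hq'⟩ := exists_gate_of_mem hω.1
  have h1 := ((hζ.comp hp').mono (κ' := κ + 5) le_rfl).d_le (hp.mono (by omega))
  have h2 := ((hω.comp hq').mono (κ' := κ + 5) le_rfl).d_le (hq.mono (by omega))
  have h3 := gate_dichotomy hζ.1 hω.1 hp' hq'
  have h4 := d_triangle (S := S) p p' q
  have h5 := d_triangle (S := S) p' q' q
  have h6 := d_triangle (S := S) z ζ p'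
  have h7 := d_triangle (S := S) z p' p
  have h8 := d_triangle (S := S) q q' w
  have h9 := d_triangle (S := S) q' ω w
  have h10 := d_comm (S := S) p p'
  have h11 := d_comm (S := S) q q'
  unfold Passes at *
  omega

variable (S) in
/-- The dichotomy for projections to `⟨c⟩` of points on one side of it. -/
def SideDichotomy (κ : ℕ) (j : Bool) (K : ℕ) : Prop :=
  ∀ o z w p q, S.Beyond j o z → S.Beyond j o w → S.IsGate S.C κ o z p → S.IsGate S.C κ o w q →
    S.d p q ≤ K ∨ S.Passes K z p q w

theorem sideDichotomy_of_same_dir {κ : ℕ}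
    (hκ : ∀ j o x, S.Beyond j o x → ∃ p, S.IsGate S.C κ o x p) {j : Bool} {K : ℕ}
    (h : ∀ o e z w p q, o⁻¹ * e ∈ S.V j → o⁻¹ * e ∉ S.C → S.Beyond (!j) e z → S.Beyond (!j) e w →
      S.IsGate S.C κ o z p → S.IsGate S.C κ o w q → S.d p q ≤ K ∨ S.Passes K z p q w) :
    S.SideDichotomy κ j (K + 11 * κ + 100) := by
  intro o z w p q hz hw hp hq
  rcases hz with hz | hz
  · exact Or.inr ((passes_of_mem hz hp hq).mono (by omega))
  rcases hw with hw | hw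
  · exact Or.inr ((passes_of_mem hw hq hp).symm.mono (by omega))
  obtain ⟨e, he, hez⟩ := exists_adjacent (S := S) j o z
  obtain ⟨e', he', hew⟩ := exists_adjacent (S := S) j o w
  by_cases hee : e⁻¹ * e' ∈ S.C
  · have heC : o⁻¹ * e ∉ S.C := fun heC =>
      (hez.change_base heC).elim hz.not_mem_C hz.not_side
    refine (h o e z w p q he heC hez (hew.change_base hee) hp hq).imp (fun h => ?_) fun h => ?_
    · omega
    · exact h.mono (by omega)
  · obtain ⟨ζ, hζ⟩ := hκ _ _ _ hez
    obtain ⟨ω, hω⟩ := hκ _ _ _ hew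
    have hpass := passes_of_ne (coset_trans (coset_symm he) he') hee hez hew hζ hω
    refine (dichotomy_of_project (hζ.of_beyond he hez) (hω.of_beyond he' hew) hp hq
      (Or.inr hpass)).imp (fun h => ?_) fun h => ?_
    · omega
    · exact h.mono (by omega)

theorem exists_sideDichotomy {κ : ℕ}
    (hκ : ∀ j o x, S.Beyond j o x → ∃ p, S.IsGate S.C κ o x p) :
    ∃ K, ∀ j, S.SideDichotomy κ j K := by
  obtain ⟨κ', hκ'⟩ := exists_coset_projection (S := S)
  have hB : ∃ K, S.SideDichotomy κ true K := by
    refine ⟨_, sideDichotomy_of_same_dir (K := 2 * (κ + κ')) hκ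
      fun o e z w p q he heC hz hw hp hq => Or.inl ?_⟩
    obtain ⟨r, hr⟩ := exists_gate_of_dir hκ' he heC
    have h1 := ((hr z hz).mono (κ' := κ + κ') (by omega)).d_le (hp.mono (by omega))
    have h2 := ((hr w hw).mono (κ' := κ + κ') (by omega)).d_le (hq.mono (by omega))
    have h3 := d_triangle (S := S) p r q
    rw [d_comm p r] at h3
    omega
  obtain ⟨K, hK⟩ := hB
  have hA : S.SideDichotomy κ false (K + 8 * κ + 100 + 11 * κ + 100) := by
    refine sideDichotomy_of_same_dir hκ fun o e z w p q he heC hz hw hp hq => ?_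
    obtain ⟨ζ, hζ⟩ := hκ _ _ _ hz
    obtain ⟨ω, hω⟩ := hκ _ _ _ hw
    exact dichotomy_of_project (hζ.of_beyond he hz) (hω.of_beyond he hw) hp hq
      (hK e z w ζ ω hz hw hζ hω)
  refine ⟨K + 8 * κ + 100 + 11 * κ + 100, fun j => ?_⟩
  cases j
  · exact hA
  · intro o z w p q hz hw hp hq
    refine (hK o z w p q hz hw hp hq).imp (fun h => ?_) fun h => ?_
    · omega
    · exact h.mono (by omega)

variable (S) in
/-- `x` and `y` do not lie beyond the same coset of `⟨c⟩` in `o V i`. -/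
def Separated (i : Bool) (o x y : G) : Prop :=
  ∀ e, o⁻¹ * e ∈ S.V i → Side S.V (!i) (e⁻¹ * x) → ¬ Side S.V (!i) (e⁻¹ * y)

theorem Separated.symm {i : Bool} {o x y : G} (h : S.Separated i o x y) : S.Separated i o y x :=
  fun e he hx hy => h e he hy hx

theorem Separated.mul_left {i : Bool} {o x y : G} (h : S.Separated i o x y) (g : G) :
    S.Separated i (g * o) (g * x) (g * y) := by
  intro e he hx hy
  exact h (g⁻¹ * e) (by simpa [mul_assoc] using he) (by simpa [mul_assoc] using hx)
    (by simpa [mul_assoc] using hy)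

theorem mem_C_of_side {i : Bool} {o e x : G} (he : o⁻¹ * e ∈ S.V i) (hx : S.Beyond (!i) o x)
    (hex : Side S.V (!i) (e⁻¹ * x)) : o⁻¹ * e ∈ S.C := by
  by_contra h
  have := hx.mul (coset_symm he) fun h' => h (coset_symm h')
  exact this.not_side hex

theorem separated_of_beyond {i : Bool} {o x y : G} (hx : S.Beyond (!i) o x) (hy : S.Beyond i o y) :
    S.Separated i o x y := by
  intro e he hex hey
  have heC := mem_C_of_side he hx hex
  have : Side S.V (!i) (o⁻¹ * y) := by simpa [mul_assoc] using hey.base_mul heC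
  rcases hy with hy | hy
  · exact this.not_mem_C hy
  · exact hy.not_side this

variable (S) in
/-- Three points have a median coset of a factor. -/
def HasMedian (x y z : G) : Prop :=
  ∃ i o, S.Separated i o x y ∧ S.Separated i o y z ∧ S.Separated i o x z

theorem HasMedian.mul_left {x y z : G} (h : S.HasMedian x y z) (g : G) :
    S.HasMedian (g * x) (g * y) (g * z) := by
  obtain ⟨i, o, h1, h2, h3⟩ := h
  exact ⟨i, g * o, h1.mul_left g, h2.mul_left g, h3.mul_left g⟩

theorem hasMedian_of_side {j : Bool} {y : G} (hy : Side S.V j y) : ∀ x z, S.Beyond (!j) 1 x →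
    Side S.V j z → S.HasMedian x y z := by
  induction hy with
  | @single j b hb hb' =>
    intro x z hx hz
    have hby : S.Beyond j 1 b := beyond_of_mem (by simpa using hb)
    refine ⟨j, 1, separated_of_beyond hx hby, fun e he hey => ?_,
      separated_of_beyond hx (Or.inr (by simpa using hz))⟩
    have h1 : e⁻¹ * b ∈ S.V j := (S.V j).mul_mem ((S.V j).inv_mem (by simpa using he)) hb
    rcases mem_C_or_side_of_mem h1 with h | h
    · exact absurd h hey.not_mem_C
    · exact absurd hey h.not_side
  | @cons j b y hb hb' hy ih =>
    intro x z hx hz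
    have hby : S.Beyond j 1 (b * y) := Or.inr (by simpa using Side.cons hb hb' hy)
    have hbz : S.Beyond j 1 z := Or.inr (by simpa using hz)
    by_cases hsep : S.Separated j 1 (b * y) z
    · exact ⟨j, 1, separated_of_beyond hx hby, hsep, separated_of_beyond hx hbz⟩
    · simp only [Separated, not_forall, not_not] at hsep
      obtain ⟨e, he, hey, hez⟩ := hsep
      have hbe : b⁻¹ * e ∈ S.C := by
        refine mem_C_of_side (coset_trans (y := 1) (by simpa using hb) he) ?_ hey
        exact Or.inr (by simpa using hy)
      have hbC : b ∉ S.C := fun h => hb' (S.C_le_V _ h)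
      have h1 : Side S.V (!j) (b⁻¹ * z) := by simpa [mul_assoc] using hez.base_mul hbe
      have h2 : Side S.V j (b⁻¹ * x) :=
        hx.mul (e' := b) (by simpa using hb) (by simpa using hbC)
      have := (ih (b⁻¹ * x) (b⁻¹ * z) (Or.inr (by simpa using h2)) h1).mul_left b
      simpa using this

theorem hasMedian (x y z : G) : S.HasMedian x y z := by
  suffices h : ∀ y z, S.HasMedian 1 y z by
    simpa using (h (x⁻¹ * y) (x⁻¹ * z)).mul_left x
  intro y z
  have h1 : ∀ j, S.Beyond j 1 1 := fun j => Or.inl (by simp [S.C.one_mem])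
  have h2 : ∀ j y, S.Separated j 1 1 y := fun j y => by
    rcases mem_C_or_side (S := S) j y with h | h | h
    · exact separated_of_beyond (h1 _) (Or.inl (by simpa using h))
    · exact separated_of_beyond (h1 _) (Or.inr (by simpa using h))
    · intro e he hex
      have hx : e⁻¹ * 1 ∈ S.V j := coset_symm he
      exact absurd hex (by
        rcases mem_C_or_side_of_mem hx with h | h
        · exact fun h' => h'.not_mem_C h
        · exact h.not_side)
  have h3 : ∀ j y z, Side S.V j y → S.HasMedian 1 y z := by
    intro j y z hy
    have hy' : S.Beyond j 1 y := Or.inr (by simpa using hy)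
    rcases mem_C_or_side (S := S) j z with hz | hz | hz
    · exact ⟨j, 1, h2 _ _, (separated_of_beyond (Or.inl (by simpa using hz)) hy').symm, h2 _ _⟩
    · exact hasMedian_of_side hy _ _ (h1 _) hz
    · exact ⟨j, 1, h2 _ _, (separated_of_beyond (Or.inr (by simpa using hz)) hy').symm, h2 _ _⟩
  rcases mem_C_or_side (S := S) true y with hy | hy | hy
  · rcases mem_C_or_side (S := S) true z with hz | hz | hz
    · exact ⟨true, 1, h2 _ _, separated_of_beyond (Or.inl (by simpa using hy))
        (Or.inl (by simpa using hz)), h2 _ _⟩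
    · obtain ⟨i, o, a, b, c⟩ := h3 _ z y hz
      exact ⟨i, o, c, b.symm, a⟩
    · obtain ⟨i, o, a, b, c⟩ := h3 _ z y hz
      exact ⟨i, o, c, b.symm, a⟩
  · exact h3 _ _ _ hy
  · exact h3 _ _ _ hy

/-- The four-point inequality for points that are pairwise separated except for one pair. -/
theorem four_point_of_passes {i : Bool} {K : ℕ} {o x y z w x' y' z' w' : G}
    (hx : o⁻¹ * x' ∈ S.V i) (hy : o⁻¹ * y' ∈ S.V i) (hz : o⁻¹ * z' ∈ S.V i)
    (hw : o⁻¹ * w' ∈ S.V i) (hxy : S.Passes K x x' y' y) (hxz : S.Passes K x x' z' z)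
    (hxw : S.Passes K x x' w' w) (hyz : S.Passes K y y' z' z) (hyw : S.Passes K y y' w' w)
    (hzw : S.d z' w' ≤ K ∨ S.Passes K z z' w' w) :
    (S.d x z + S.d y w ≤ S.d x y + S.d z w + (6 * K + 2) ∨
      S.d x z + S.d y w ≤ S.d y z + S.d x w + (6 * K + 2)) ∧
    (S.d x y + S.d z w ≤ S.d x z + S.d y w + (6 * K + 2) ∨
      S.d x y + S.d z w ≤ S.d y z + S.d x w + (6 * K + 2)) ∧
    (S.d y z + S.d x w ≤ S.d x z + S.d y w + (6 * K + 2) ∨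
      S.d y z + S.d x w ≤ S.d x y + S.d z w + (6 * K + 2)) := by
  have upper : ∀ a a' b' b : G, S.d a b ≤ S.d a a' + S.d a' b' + S.d b' b := fun a a' b' b => by
    have h1 := d_triangle (S := S) a a' b
    have h2 := d_triangle (S := S) a' b' b
    omega
  have u1 := upper x x' y' y
  have u2 := upper x x' z' z
  have u3 := upper x x' w' w
  have u4 := upper y y' z' z
  have u5 := upper y y' w' w
  have u6 := upper z z' w' w
  have t1 := d_triangle (S := S) x' z' w'
  have t2 := d_triangle (S := S) x' w' z'
  have t3 := d_triangle (S := S) y' z' w'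
  have t4 := d_triangle (S := S) y' w' z'
  have t5 := d_triangle (S := S) x' z' y'
  have f1 := four_point hx hy hz hw
  have f2 := four_point hx hz hy hw
  have f3 := four_point hy hx hz hw
  have c1 := d_comm (S := S) y y'
  have c2 := d_comm (S := S) z z'
  have c3 := d_comm (S := S) z' w'
  have c4 := d_comm (S := S) y' z'
  have c5 := d_comm (S := S) x' y'
  unfold Passes at *
  refine ⟨?_, ?_, ?_⟩
  · omega
  · omega
  · omega

theorem passes_of_separated {i : Bool} {κ : ℕ} {o e e' x p q y : G} (h : S.Separated i o x y)
    (he : o⁻¹ * e ∈ S.V i) (he' : o⁻¹ * e' ∈ S.V i) (hx : S.Beyond (!i) e x)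
    (hy : S.Beyond (!i) e' y) (hp : S.IsGate S.C κ e x p) (hq : S.IsGate S.C κ e' y q) :
    S.Passes (3 * κ) x p q y := by
  by_cases hee : e⁻¹ * e' ∈ S.C
  · have hq' := hq.change_base hee
    rcases hx with hx | hx
    · exact passes_of_mem hx hp hq'
    rcases hy.change_base hee with hy | hy
    · exact (passes_of_mem hy hq' hp).symm
    · exact absurd hy (h e he hx)
  · exact passes_of_ne (coset_trans (coset_symm he) he') hee hx hy hp hq

theorem separated_or {i : Bool} {o x y w : G} (h : S.Separated i o x y) :
    S.Separated i o x w ∨ S.Separated i o y w := by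
  by_contra! hcon
  simp only [Separated, not_forall, not_not] at hcon
  obtain ⟨⟨e, he, hex, hew⟩, e', he', hey, hew'⟩ := hcon
  have hee : e⁻¹ * e' ∈ S.C :=
    mem_C_of_side (coset_trans (coset_symm he) he') (Or.inr hew) hew'
  refine h e he hex ?_
  simpa [mul_assoc] using hey.base_mul hee

variable (S) in
theorem exists_four_point : ∃ K, ∀ x y z w : G,
    S.d x z + S.d y w ≤ S.d x y + S.d z w + K ∨ S.d x z + S.d y w ≤ S.d y z + S.d x w + K := by
  obtain ⟨κ, hκ⟩ := S.exists_gate_const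
  obtain ⟨K, hK⟩ := exists_sideDichotomy hκ
  refine ⟨6 * (K + 3 * κ) + 2, fun x y z w => ?_⟩
  obtain ⟨i, o, hxy, hyz, hxz⟩ := hasMedian (S := S) x y z
  choose e he hbe using exists_adjacent (S := S) i o
  choose g hg using fun a => hκ _ _ _ (hbe a)
  have hgV : ∀ a, o⁻¹ * g a ∈ S.V i := fun a => ((hg a).of_beyond (he a) (hbe a)).1
  have hsep : ∀ a b, S.Separated i o a b → S.Passes (K + 3 * κ) a (g a) (g b) b := fun a b h =>
    (passes_of_separated h (he a) (he b) (hbe a) (hbe b) (hg a) (hg b)).mono (by omega)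
  have hdich : ∀ a b, S.d (g a) (g b) ≤ K + 3 * κ ∨ S.Passes (K + 3 * κ) a (g a) (g b) b := by
    intro a b
    by_cases hee : (e a)⁻¹ * e b ∈ S.C
    · refine (hK _ _ _ _ _ _ (hbe a) ((hbe b).change_base hee) (hg a)
        ((hg b).change_base hee)).imp (fun h => ?_) fun h => ?_
      · omega
      · exact h.mono (by omega)
    · exact Or.inr ((passes_of_ne (coset_trans (coset_symm (he a)) (he b)) hee (hbe a) (hbe b)
        (hg a) (hg b)).mono (by omega))
  have key : ∀ a b c, S.Separated i o a b → S.Separated i o b c → S.Separated i o a c →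
      S.Separated i o a w → S.Separated i o b w → _ := fun a b c hab hbc hac haw hbw =>
    four_point_of_passes (hgV a) (hgV b) (hgV c) (hgV w) (hsep _ _ hab) (hsep _ _ hac)
      (hsep _ _ haw) (hsep _ _ hbc) (hsep _ _ hbw) (hdich c w)
  have c1 := d_comm (S := S) x y
  have c2 := d_comm (S := S) y z
  have c3 := d_comm (S := S) x z
  rcases separated_or (w := w) hxy with hxw | hyw
  · rcases separated_or (w := w) hyz with hyw | hzw
    · have := key x y z hxy hyz hxz hxw hyw
      omega
    · have := key x z y hxz hyz.symm hxy hxw hzw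
      omega
  · rcases separated_or (w := w) hxz with hxw | hzw
    · have := key x y z hxy hyz hxz hxw hyw
      omega
    · have := key y z x hyz hxz.symm hxy.symm hyw hzw
      omega

theorem isWordHyperbolic (S : CyclicAmalgam G) : IsWordHyperbolic G := by
  obtain ⟨K, hK⟩ := S.exists_four_point
  refine ⟨S.gens, isSymmGen_gens, K / 2, by positivity, fun x y z w => ?_⟩
  change min (((S.d x w : ℝ) + S.d y w - S.d x y) / 2)
    (((S.d y w : ℝ) + S.d z w - S.d y z) / 2) - K / 2 ≤ ((S.d x w : ℝ) + S.d z w - S.d x z) / 2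
  rw [sub_le_iff_le_add, min_le_iff]
  rcases hK x y z w with h | h
  · left
    have : (S.d x z : ℝ) + S.d y w ≤ S.d x y + S.d z w + K := by exact_mod_cast h
    linarith
  · right
    have : (S.d x z : ℝ) + S.d y w ≤ S.d y z + S.d x w + K := by exact_mod_cast h
    linarith

end CyclicAmalgam

namespace CyclicAmalgam

variable {G : Type u} [Group G] {S : CyclicAmalgam G} {H : Subgroup G}

variable (S H) in
/-- `z` lies in the `r`-neighbourhood of the subgroup `H`. -/
def Near (r : ℕ) (z : G) : Prop := ∃ h ∈ H, S.d z h ≤ r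

theorem near_of_mem {r : ℕ} {z : G} (hz : z ∈ H) : S.Near H r z := ⟨z, hz, by simp [d_self]⟩

theorem Near.mono {r r' : ℕ} {z : G} (h : S.Near H r z) (hr : r ≤ r') : S.Near H r' z :=
  h.imp fun _ h => ⟨h.1, h.2.trans hr⟩

theorem Near.of_d_le {r s : ℕ} {z z' : G} (h : S.Near H r z) (hd : S.d z z' ≤ s) :
    S.Near H (r + s) z' := by
  obtain ⟨h, hh, hz⟩ := h
  refine ⟨h, hh, ?_⟩
  have := d_triangle (S := S) z' z h
  rw [d_comm z' z] at this
  omega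

theorem Near.mul_left {r : ℕ} {z g : G} (h : S.Near H r z) (hg : g ∈ H) :
    S.Near H r (g * z) := by
  obtain ⟨h, hh, hz⟩ := h
  exact ⟨g * h, H.mul_mem hg hh, by rwa [d_mul_left]⟩

variable (S H) in
/-- All vertices of the path from `p` labelled by `l` lie in the `r`-neighbourhood of `H`. -/
def NearPath (r : ℕ) (p : G) (l : List G) : Prop :=
  (∀ y ∈ l, y ∈ S.gens) ∧ ∀ l₁ l₂, l = l₁ ++ l₂ → S.Near H r (p * l₁.prod)

theorem NearPath.mono {r r' : ℕ} {p : G} {l : List G} (h : S.NearPath H r p l) (hr : r ≤ r') :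
    S.NearPath H r' p l :=
  ⟨h.1, fun l₁ l₂ hl => (h.2 l₁ l₂ hl).mono hr⟩

theorem NearPath.mul_left {r : ℕ} {p g : G} {l : List G} (h : S.NearPath H r p l) (hg : g ∈ H) :
    S.NearPath H r (g * p) l :=
  ⟨h.1, fun l₁ l₂ hl => by simpa [mul_assoc] using (h.2 l₁ l₂ hl).mul_left hg⟩

theorem NearPath.append {r : ℕ} {p : G} {l l' : List G} (h : S.NearPath H r p l)
    (h' : S.NearPath H r (p * l.prod) l') : S.NearPath H r p (l ++ l') := by
  refine ⟨fun y hy => (List.mem_append.1 hy).elim (h.1 y) (h'.1 y), fun l₁ l₂ hl => ?_⟩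
  rcases List.append_eq_append_iff.1 hl with ⟨m, rfl, hm⟩ | ⟨m, rfl, hm⟩
  · simpa [mul_assoc] using h'.2 m l₂ hm
  · exact h.2 l₁ m rfl

theorem NearPath.drop {r : ℕ} {p : G} {l l' : List G} (h : S.NearPath H r p (l ++ l')) :
    S.NearPath H r (p * l.prod) l' :=
  ⟨fun y hy => h.1 y (by simp [hy]), fun l₁ l₂ hl => by
    simpa [mul_assoc] using h.2 (l ++ l₁) l₂ (by simp [hl])⟩

theorem NearPath.start {r : ℕ} {p : G} {l : List G} (h : S.NearPath H r p l) : S.Near H r p := by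
  simpa using h.2 [] l rfl

theorem exists_nearPath_of_d_le {r s : ℕ} {p q : G} (hp : S.Near H r p) (hd : S.d p q ≤ s) :
    ∃ l, S.NearPath H (r + s) p l ∧ p * l.prod = q := by
  obtain ⟨l, hl, hlX, hlp⟩ := exists_geodesic_word gens_inv (mem_closure_gens (S := S) (p⁻¹ * q))
  refine ⟨l, ⟨hlX, ?_⟩, by rw [hlp]; group⟩
  rintro l₁ l₂ rfl
  refine hp.of_d_le ?_
  have h1 := wordLength_prod_le (X := S.gens) (l := l₁) fun z hz =>
    hlX z (List.mem_append_left _ hz)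
  rw [List.length_append] at hl
  simp only [d, wordDist, inv_mul_cancel_left] at hd ⊢
  omega

variable (S) in
theorem exists_nearPath_const (hH : H.FG) :
    ∃ r, ∀ h ∈ H, ∃ l, S.NearPath H r 1 l ∧ l.prod = h := by
  obtain ⟨T, rfl⟩ := hH
  refine ⟨∑ t ∈ T, S.d 1 t, fun h hh => ?_⟩
  have hT : ∀ t ∈ T, S.d 1 t ≤ ∑ t ∈ T, S.d 1 t := fun t ht =>
    Finset.single_le_sum (f := fun t => S.d 1 t) (fun _ _ => Nat.zero_le _) ht
  have hT' : ∀ t ∈ T, S.d 1 t⁻¹ ≤ ∑ t ∈ T, S.d 1 t := fun t ht => by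
    have := d_mul_left (S := S) t 1 t⁻¹
    rw [mul_one, mul_inv_cancel] at this
    rw [← this, d_comm]; exact hT t ht
  have key : ∀ h ∈ Subgroup.closure (T : Set G), ∀ t, S.d 1 t ≤ ∑ t ∈ T, S.d 1 t →
      (∃ l, S.NearPath (Subgroup.closure (T : Set G)) (∑ t ∈ T, S.d 1 t) 1 l ∧ l.prod = h) →
      ∃ l, S.NearPath (Subgroup.closure (T : Set G)) (∑ t ∈ T, S.d 1 t) 1 l ∧ l.prod = h * t := by
    rintro h hh t ht ⟨l, hl, rfl⟩
    rw [← d_mul_left l.prod, mul_one] at ht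
    obtain ⟨l', hl', hlp⟩ := exists_nearPath_of_d_le (near_of_mem (r := 0) hh) ht
    rw [zero_add] at hl'
    exact ⟨l ++ l', hl.append (by simpa using hl'), by rw [List.prod_append, hlp]⟩
  induction hh using Subgroup.closure_induction_right with
  | one =>
    refine ⟨[], ⟨by simp, fun l₁ l₂ hl => ?_⟩, rfl⟩
    obtain ⟨rfl, rfl⟩ := List.append_eq_nil_iff.1 hl.symm
    exact near_of_mem (by simp)
  | mul_right x hx y hy ih => exact key x hx y (hT y hy) ih
  | mul_inv_cancel x hx y hy ih => exact key x hx _ (hT' y hy) ih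

/-- Points near `H` are joined by paths near `H`. -/
theorem exists_nearPath {r₀ : ℕ} (h₀ : ∀ h ∈ H, ∃ l, S.NearPath H r₀ 1 l ∧ l.prod = h) {r : ℕ}
    {p q : G} (hp : S.Near H r p) (hq : S.Near H r q) :
    ∃ l, S.NearPath H (r₀ + 2 * r) p l ∧ p * l.prod = q := by
  obtain ⟨h, hh, hph⟩ := hp
  obtain ⟨h', hh', hqh⟩ := hq
  obtain ⟨l₁, hl₁, e₁⟩ := exists_nearPath_of_d_le (⟨h, hh, hph⟩ : S.Near H r p) hph
  obtain ⟨l₂, hl₂, e₂⟩ := h₀ (h⁻¹ * h') (H.mul_mem (H.inv_mem hh) hh')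
  rw [d_comm] at hqh
  obtain ⟨l₃, hl₃, e₃⟩ := exists_nearPath_of_d_le (near_of_mem (r := r) hh') hqh
  refine ⟨l₁ ++ l₂ ++ l₃, ((hl₁.mono (by omega)).append ?_).append ?_, ?_⟩
  · rw [e₁]; simpa using (hl₂.mono (by omega)).mul_left hh
  · rw [List.prod_append, ← mul_assoc, e₁, e₂, mul_inv_cancel_left]; exact hl₃.mono (by omega)
  · rw [List.prod_append, List.prod_append, e₂, ← mul_assoc, ← mul_assoc, e₁,
      mul_inv_cancel_left, e₃]

variable (S H) in
/-- The stabiliser in `H` of the coset `g⟨c⟩` is infinite. -/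
def InfType (g : G) : Prop := ∃ m : ℕ, 0 < m ∧ g * S.c ^ m * g⁻¹ ∈ H

theorem infType_of_zpow {g : G} {m : ℤ} (hm : m ≠ 0) (h : g * S.c ^ m * g⁻¹ ∈ H) :
    S.InfType H g := by
  refine ⟨m.natAbs, by omega, ?_⟩
  rcases Int.natAbs_eq m with e | e
  · rw [e, zpow_natCast] at h; exact h
  · rw [e, zpow_neg, zpow_natCast] at h
    have := H.inv_mem h
    simpa [mul_assoc] using this

theorem InfType.mul_left {g h : G} (hg : S.InfType H g) (hh : h ∈ H) : S.InfType H (h * g) := by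
  obtain ⟨m, hm, hg⟩ := hg
  refine ⟨m, hm, ?_⟩
  have := H.mul_mem (H.mul_mem hh hg) (H.inv_mem hh)
  simpa [mul_assoc] using this

variable (S H) in
theorem exists_near_of_infType (r : ℕ) : ∃ r', ∀ p z : G, S.InfType H p → S.Near H r p →
    p⁻¹ * z ∈ S.C → S.Near H r' z := by
  classical
  have hfin := finite_ball (S := S) 1 r
  let f : G → ℕ := fun b => if hb : S.InfType H b then hb.choose else 0
  refine ⟨r + ∑ b ∈ hfin.toFinset, f b, fun p z hp hpr hz => ?_⟩
  obtain ⟨n, rfl⟩ := exists_eq_mul_zpow hz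
  obtain ⟨h, hh, hd⟩ := id hpr
  have hb : S.InfType H (h⁻¹ * p) := hp.mul_left (H.inv_mem hh)
  have hmem : h⁻¹ * p ∈ hfin.toFinset := by
    rw [Set.Finite.mem_toFinset, Set.mem_ofPred_eq, ← d_mul_left h]
    simpa [d_comm] using hd
  have hle : f (h⁻¹ * p) ≤ ∑ b ∈ hfin.toFinset, f b :=
    Finset.single_le_sum (f := f) (fun _ _ => Nat.zero_le _) hmem
  have hspec := hb.choose_spec
  simp only [f, dif_pos hb] at hle
  generalize hb.choose = m at hspec hle
  obtain ⟨hm, hH⟩ := hspec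
  have hpm : p * S.c ^ m * p⁻¹ ∈ H := by
    have := H.mul_mem (H.mul_mem hh hH) (H.inv_mem hh)
    simpa [mul_assoc] using this
  have hnear : S.Near H r (p * S.c ^ ((m : ℤ) * (n / m))) := by
    have h1 := hpr.mul_left (H.zpow_mem hpm (n / m))
    rw [conj_zpow] at h1
    simpa [zpow_mul] using h1
  refine (hnear.of_d_le (s := m) ?_).mono (by simpa [f] using hle)
  rw [d_zpow]
  have h1 := Int.emod_nonneg n (b := m) (by omega)
  have h2 := Int.emod_lt_of_pos n (b := m) (by omega)
  have h3 := Int.emod_add_mul_ediv n m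
  omega

variable (S H) in
theorem exists_d_le_of_not_infType (r : ℕ) : ∃ r', ∀ p q : G, ¬ S.InfType H p → S.Near H r p →
    S.Near H r q → p⁻¹ * q ∈ S.C → S.d p q ≤ r' := by
  classical
  have hfin := finite_ball (S := S) 1 r
  let f : G × G → ℕ := fun b =>
    if hb : ∃ n : ℤ, b.1 * S.c ^ n * b.2⁻¹ ∈ H then hb.choose.natAbs else 0
  refine ⟨∑ b ∈ hfin.toFinset ×ˢ hfin.toFinset, f b, fun p q hp hpr hqr hq => ?_⟩
  obtain ⟨n, rfl⟩ := exists_eq_mul_zpow hq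
  obtain ⟨h, hh, hd⟩ := hpr
  obtain ⟨h', hh', hd'⟩ := hqr
  have hmem : ∀ {z k : G}, S.d z k ≤ r → k⁻¹ * z ∈ hfin.toFinset := by
    intro z k hd
    rw [Set.Finite.mem_toFinset, Set.mem_ofPred_eq, ← d_mul_left k]
    simpa [d_comm] using hd
  have hn : h⁻¹ * p * S.c ^ n * (h'⁻¹ * (p * S.c ^ n))⁻¹ ∈ H := by
    have e : h⁻¹ * p * S.c ^ n * (h'⁻¹ * (p * S.c ^ n))⁻¹ = h⁻¹ * h' := by group
    rw [e]; exact H.mul_mem (H.inv_mem hh) hh'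
  have hb : ∃ n' : ℤ, h⁻¹ * p * S.c ^ n' * (h'⁻¹ * (p * S.c ^ n))⁻¹ ∈ H := ⟨n, hn⟩
  have hle : f (h⁻¹ * p, h'⁻¹ * (p * S.c ^ n)) ≤ ∑ b ∈ hfin.toFinset ×ˢ hfin.toFinset, f b :=
    Finset.single_le_sum (f := f) (fun _ _ => Nat.zero_le _)
      (Finset.mem_product.2 ⟨hmem hd, hmem hd'⟩)
  have hspec := hb.choose_spec
  have hf : f (h⁻¹ * p, h'⁻¹ * (p * S.c ^ n)) = hb.choose.natAbs := dif_pos hb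
  rw [hf] at hle
  generalize hb.choose = n' at hspec hle
  have hnn : n' = n := by
    by_contra hne
    apply hp
    refine infType_of_zpow (m := n - n') (by omega) ?_
    have h1 := H.mul_mem (H.mul_mem hh (H.mul_mem hn (H.inv_mem hspec))) (H.inv_mem hh)
    have e : p * S.c ^ (n - n') * p⁻¹ = h * (h⁻¹ * p * S.c ^ n * (h'⁻¹ * (p * S.c ^ n))⁻¹ *
        (h⁻¹ * p * S.c ^ n' * (h'⁻¹ * (p * S.c ^ n))⁻¹)⁻¹) * h⁻¹ := by
      rw [zpow_sub]; group
    rwa [e]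
  have := d_zpow (S := S) p 0 n
  rw [zpow_zero, mul_one, sub_zero] at this
  rw [this, ← hnn]; exact hle

end CyclicAmalgam

namespace CyclicAmalgam

variable {G : Type u} [Group G] {S : CyclicAmalgam G} {H : Subgroup G}

variable (S H) in
/-- A step of length at most `R` between points of a coset of `V i` near `H`. -/
def NearStep (R : ℕ) (i : Bool) (a b : G) : Prop :=
  S.Near H R a ∧ S.Near H R b ∧ a⁻¹ * b ∈ S.V i ∧ S.d a b ≤ R

theorem reflTransGen_nearStep_zpow {R : ℕ} {i : Bool} {p : G} (hR : 1 ≤ R)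
    (h : ∀ m : ℤ, S.Near H R (p * S.c ^ m)) (n : ℤ) :
    Relation.ReflTransGen (S.NearStep H R i) p (p * S.c ^ n) := by
  have hstep : ∀ a b : ℤ, (b - a).natAbs ≤ 1 →
      S.NearStep H R i (p * S.c ^ a) (p * S.c ^ b) := fun a b hab => by
    refine ⟨h a, h b, coset_trans (y := p) ?_ ?_, by rw [d_zpow]; omega⟩
    · exact coset_symm (coset_C_le_V (inv_mul_mul_zpow_mem p a))
    · exact coset_C_le_V (inv_mul_mul_zpow_mem p b)
  induction n using Int.induction_on with
  | zero => simpa using Relation.ReflTransGen.refl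
  | succ n ih => exact ih.tail (hstep _ _ (by omega))
  | pred n ih => exact ih.tail (hstep _ _ (by omega))

/-- A path near `H` between points of a coset of a factor can be pushed into that coset. -/
theorem reflTransGen_of_nearPath {r R : ℕ} (hrR : r ≤ R) (hR : 1 ≤ R)
    (hinf : ∀ p z : G, S.InfType H p → S.Near H r p → p⁻¹ * z ∈ S.C → S.Near H R z)
    (hfin : ∀ p q : G, ¬ S.InfType H p → S.Near H r p → S.Near H r q → p⁻¹ * q ∈ S.C →
      S.d p q ≤ R) (i : Bool) (n : ℕ) : ∀ (p : G) (l : List G), l.length ≤ n →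
    S.NearPath H r p l → l.prod ∈ S.V i →
      Relation.ReflTransGen (S.NearStep H R i) p (p * l.prod) := by
  induction n with
  | zero =>
    intro p l hl _ _
    rw [List.length_eq_zero_iff.1 (Nat.le_zero.1 hl)]
    simpa using Relation.ReflTransGen.refl
  | succ n ih =>
    intro p l hl hpath hlV
    cases l with
    | nil => simpa using Relation.ReflTransGen.refl
    | cons y l =>
      have hp := hpath.start
      have hy := hpath.1 y (by simp)
      rw [List.length_cons] at hl
      rw [List.prod_cons] at hlV ⊢
      by_cases hyi : y ∈ S.V i
      · have hpath' : S.NearPath H r (p * y) l := by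
          simpa using NearPath.drop (l := [y]) (l' := l) hpath
        have h1 := ih (p * y) l (by omega) hpath' ((Subgroup.mul_mem_cancel_left _ hyi).1 hlV)
        rw [← mul_assoc]
        refine h1.head ⟨hp.mono hrR, hpath'.start.mono hrR, by simpa using hyi, ?_⟩
        have := wordLength_le_one hy
        simp only [d, wordDist, inv_mul_cancel_left]
        omega
      · have hyj : y ∈ S.V (!i) := by
          obtain ⟨j, hj⟩ := mem_gens.1 hy
          have := X_subset_V _ hj
          cases i <;> cases j <;> simp_all
        obtain ⟨l₁, l₂, rfl, h⟩ := exists_append_mem_C (S := S) (i := !i) (x := y) (l := l)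
          (fun z hz => (mem_gens.1 (hpath.1 z (by simp [hz]))).imp fun k hk => X_subset_V k hk)
          (Or.inr (.single hyj (by simpa using hyi)))
          (by simpa using mem_C_or_side_of_mem hlV)
        rw [List.length_append] at hl
        have hpath' : S.NearPath H r (p * (y * l₁.prod)) l₂ := by
          simpa using NearPath.drop (l := y :: l₁) (l' := l₂) hpath
        rw [List.prod_append, ← mul_assoc y] at hlV ⊢
        have h1 := ih _ l₂ (by omega) hpath'
          ((Subgroup.mul_mem_cancel_left _ (S.C_le_V _ h)).1 hlV)
        rw [← mul_assoc]
        refine Relation.ReflTransGen.trans ?_ h1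
        have hmem : p⁻¹ * (p * (y * l₁.prod)) ∈ S.C := by simpa using h
        by_cases ht : S.InfType H p
        · obtain ⟨m, hm⟩ := exists_eq_mul_zpow hmem
          rw [hm]
          exact reflTransGen_nearStep_zpow hR
            (fun m => hinf p _ ht hp (inv_mul_mul_zpow_mem p m)) m
        · exact .single ⟨hp.mono hrR, hpath'.start.mono hrR, coset_C_le_V hmem,
            hfin _ _ ht hp hpath'.start hmem⟩

theorem mem_V_of_reflTransGen {R : ℕ} {i : Bool} {p q : G}
    (h : Relation.ReflTransGen (S.NearStep H R i) p q) : p⁻¹ * q ∈ S.V i := by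
  induction h with
  | refl => simp
  | tail _ hbc ih => exact coset_trans ih hbc.2.2.1

/-- A chain in a tree-like space comes close to every point between its ends. -/
theorem exists_step_of_between {R : ℕ} {i : Bool} {p q z : G} {T : ℕ}
    (h : Relation.ReflTransGen (S.NearStep H R i) p q) (hz : p⁻¹ * z ∈ S.V i)
    (hT : S.ρ i (p⁻¹ * z) + S.ρ i (q⁻¹ * z) ≤ S.ρ i (p⁻¹ * q) + T) :
    p = q ∨ ∃ a b, S.NearStep H R i a b ∧ a⁻¹ * z ∈ S.V i ∧
      S.ρ i (a⁻¹ * z) + S.ρ i (b⁻¹ * z) ≤ S.ρ i (a⁻¹ * b) + T := by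
  induction h with
  | refl => exact Or.inl rfl
  | @tail b q hb hbq ih =>
    right
    have hpb := mem_V_of_reflTransGen hb
    have hpp : p⁻¹ * p ∈ S.V i := by simp
    have hbz := coset_trans (coset_symm hpb) hz
    rcases ρ_four_point hpp hpb (coset_trans hpb hbq.2.2.1) hz with h | h
    · rcases ih (by omega) with rfl | h'
      · refine ⟨p, q, hbq, hz, hT⟩
      · exact h'
    · exact ⟨b, q, hbq, hbz, by omega⟩

/-- Geodesics in a coset of a factor between points near `H` stay near `H`. -/
theorem exists_near_of_between {r₀ : ℕ}
    (h₀ : ∀ h ∈ H, ∃ l, S.NearPath H r₀ 1 l ∧ l.prod = h) (r : ℕ) :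
    ∃ R, ∀ (i : Bool) (p q z : G), S.Near H r p → S.Near H r q → p⁻¹ * q ∈ S.V i →
      p⁻¹ * z ∈ S.V i → S.d p z + S.d z q = S.d p q → S.Near H R z := by
  obtain ⟨r₁, h₁⟩ := exists_near_of_infType S H (r₀ + 2 * r)
  obtain ⟨r₂, h₂⟩ := exists_d_le_of_not_infType S H (r₀ + 2 * r)
  let R := r₀ + 2 * r + r₁ + r₂ + 1
  refine ⟨R + (R + 2), fun i p q z hp hq hpq hpz hd => ?_⟩
  obtain ⟨l, hl, hlp⟩ := exists_nearPath h₀ hp hq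
  have hlV : l.prod ∈ S.V i := by rw [← hlp] at hpq; simpa using hpq
  have hchain := reflTransGen_of_nearPath (R := R) (by omega) (by omega)
    (fun p z a b c => (h₁ p z a b c).mono (by omega))
    (fun p q a b c d => (h₂ p q a b c d).trans (by omega)) i _ p l le_rfl hl hlV
  rw [hlp] at hchain
  have hqz := coset_trans (coset_symm hpq) hpz
  have h3 := ρ_le_d hpz
  have h4 := ρ_le_d hqz
  have h5 := d_le_ρ hpq
  rw [d_comm q z] at h4
  have h6 : S.L i * S.d p z + S.L i * S.d z q = S.L i * S.d p q := by rw [← mul_add, hd]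
  rcases exists_step_of_between (T := S.L i) hchain hpz (by omega) with rfl | ⟨a, b, hab, haz, h⟩
  · rw [d_self] at hd
    have : p = z := d_eq_zero (S := S) (by omega)
    exact this ▸ hp.mono (by omega)
  · refine hab.1.of_d_le ?_
    have h7 := d_le_ρ haz
    have h8 := ρ_le_d hab.2.2.1
    have h9 : S.L i * S.d a b ≤ S.L i * R := Nat.mul_le_mul_left _ hab.2.2.2
    refine le_of_mul_le_mul_left (?_ : S.L i * _ ≤ S.L i * _) (S.L_pos i)
    rw [mul_add]
    omega

theorem exists_gate_of_not_infType {r₀ : ℕ}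
    (h₀ : ∀ h ∈ H, ∃ l, S.NearPath H r₀ 1 l ∧ l.prod = h) (r : ℕ) :
    ∃ κ, ∀ (i : Bool) (a a' q : G), S.Near H r a → S.Near H r a' → a⁻¹ * a' ∈ S.V i →
      ¬ S.InfType H a → a⁻¹ * q ∈ S.C → S.d a a' + S.d a q ≤ S.d a' q + κ := by
  obtain ⟨R, hR⟩ := exists_near_of_between h₀ r
  obtain ⟨r', hr'⟩ := exists_d_le_of_not_infType S H (R + 4 + r)
  refine ⟨2 * r' + 1, fun i a a' q ha ha' haa ht hq => ?_⟩
  have hqV : a⁻¹ * q ∈ S.V i := coset_C_le_V hq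
  have hself : a⁻¹ * a ∈ S.V i := by simp
  set t := (S.d a a' + S.d a q - S.d a' q) / 2 with htdef
  have t1 := d_triangle (S := S) a q a'
  have t2 := d_triangle (S := S) a a' q
  have t3 := d_triangle (S := S) a' a q
  rw [d_comm q a'] at t1
  obtain ⟨z, hz, hz1, hz2⟩ := exists_between haa (k := t) (by omega)
  obtain ⟨ε, -, hε⟩ := exists_direction_zpow hq
  obtain ⟨hy1, hy2⟩ := hε t (by omega)
  have hy := inv_mul_mul_zpow_mem (S := S) a (ε * t)
  generalize a * S.c ^ (ε * (t : ℤ)) = y at hy1 hy2 hy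
  have f1 := four_point hz haa hqV hself
  have f2 := four_point hz hqV (coset_C_le_V (i := i) hy) hself
  have hzR := hR i a a' z ha ha' haa hz (by omega)
  have c1 := d_comm (S := S) z a
  have c2 := d_comm (S := S) z a'
  have c3 := d_comm (S := S) a q
  have c4 := d_comm (S := S) a a'
  have c5 := d_comm (S := S) q y
  have c6 := d_comm (S := S) y a
  have hzy : S.d z y ≤ 4 := by omega
  have := hr' a y ht (ha.mono (by omega)) ((hzR.of_d_le hzy).mono (by omega)) hy
  omega

theorem exists_d_le_add {r₀ : ℕ}
    (h₀ : ∀ h ∈ H, ∃ l, S.NearPath H r₀ 1 l ∧ l.prod = h) (r : ℕ) :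
    ∃ κ, ∀ (i : Bool) (a a' q q' : G), S.Near H r a → S.Near H r a' → a⁻¹ * a' ∈ S.V i →
      a⁻¹ * q ∈ S.C → a'⁻¹ * q' ∈ S.C → (q = a ∨ ¬ S.InfType H a) →
      (q' = a' ∨ ¬ S.InfType H a') → S.d a a' ≤ S.d q q' + κ := by
  obtain ⟨κ, hκ⟩ := exists_gate_of_not_infType h₀ r
  refine ⟨2 * κ + 2, fun i a a' q q' ha ha' haa hq hq' ht ht' => ?_⟩
  have c1 := d_comm (S := S) a a'
  have h1 : S.d a a' + S.d a q ≤ S.d a' q + κ := by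
    rcases ht with rfl | ht
    · rw [d_self]; omega
    · exact hκ i a a' q ha ha' haa ht hq
  have h2 : S.d a' a + S.d a' q' ≤ S.d a q' + κ := by
    rcases ht' with rfl | ht'
    · rw [d_self]; omega
    · exact hκ i a' a q' ha' ha (coset_symm haa) ht' hq'
  have hself : a⁻¹ * a ∈ S.V i := by simp
  have f := four_point hself haa (coset_trans haa (coset_C_le_V hq')) (coset_C_le_V (i := i) hq)
  have c2 := d_comm (S := S) q q'
  omega

variable (S H) in
/-- `k'` is reached from `k` by at most `n` factors in `H` of length at most `R`. -/
def Reaches (R n : ℕ) (k k' : G) : Prop :=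
  ∃ l : List G, l.length ≤ n ∧ (∀ y ∈ l, y ∈ H ∧ S.d 1 y ≤ R) ∧ k * l.prod = k'

theorem Reaches.trans {R n n' : ℕ} {k k' k'' : G} (h : S.Reaches H R n k k')
    (h' : S.Reaches H R n' k' k'') : S.Reaches H R (n + n') k k'' := by
  obtain ⟨l, hl, hlR, rfl⟩ := h
  obtain ⟨l', hl', hlR', rfl⟩ := h'
  refine ⟨l ++ l', by simp; omega, fun y hy => ?_, by simp [mul_assoc]⟩
  exact (List.mem_append.1 hy).elim (hlR y) (hlR' y)

theorem Reaches.mono {R n n' : ℕ} {k k' : G} (h : S.Reaches H R n k k') (hn : n ≤ n') :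
    S.Reaches H R n' k k' := by
  obtain ⟨l, hl, h⟩ := h
  exact ⟨l, hl.trans hn, h⟩

theorem reaches_one {R : ℕ} {k k' : G} (hk : k ∈ H) (hk' : k' ∈ H) (hd : S.d k k' ≤ R) :
    S.Reaches H R 1 k k' := by
  refine ⟨[k⁻¹ * k'], by simp, fun y hy => ?_, by simp⟩
  rw [List.mem_singleton] at hy
  subst hy
  refine ⟨H.mul_mem (H.inv_mem hk) hk', ?_⟩
  rw [← d_mul_left k]
  simpa using hd

theorem reaches_of_between {R : ℕ} {i : Bool} {a k : G} (hk : k ∈ H) (hak : S.d a k ≤ R) (n : ℕ) :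
    ∀ a' k' : G, k' ∈ H → S.d a' k' ≤ R → a⁻¹ * a' ∈ S.V i → S.d a a' = n →
    (∀ z, a⁻¹ * z ∈ S.V i → S.d a z + S.d z a' = S.d a a' → S.Near H R z) →
    S.Reaches H (2 * R + 1) (n + 1) k k' := by
  induction n with
  | zero =>
    intro a' k' hk' hak' haa hd hz
    obtain rfl := d_eq_zero hd
    rw [d_comm] at hak
    have := d_triangle (S := S) k a k'
    exact (reaches_one hk hk' (by omega)).mono (by omega)
  | succ n ih =>
    intro a' k' hk' hak' haa hd hz
    obtain ⟨z, hzV, hz1, hz2⟩ := exists_between haa (k := n) (by omega)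
    obtain ⟨m, hm, hzm⟩ := hz z hzV (by omega)
    have h1 := ih z m hm hzm hzV hz1 fun y hy hyd => hz y hy (by
      have t1 := d_triangle (S := S) y z a'
      have t2 := d_triangle (S := S) a y a'
      omega)
    have t1 := d_triangle (S := S) m z k'
    have t2 := d_triangle (S := S) z a' k'
    have t3 := d_comm (S := S) m z
    exact h1.trans (reaches_one hm hk' (by omega))

theorem NearPath.exists_near_mem_C {r : ℕ} {j : Bool} {l : List G} {e p : G}
    (h : S.NearPath H r p l) (hp : S.Beyond (!j) e p) (hq : S.Beyond j e (p * l.prod)) :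
    ∃ a, e⁻¹ * a ∈ S.C ∧ S.Near H r a := by
  obtain ⟨l₁, l₂, rfl, h'⟩ := exists_append_mem_C (l := l) (x := e⁻¹ * p) (i := !j)
    (fun z hz => (mem_gens.1 (h.1 z hz)).imp fun k hk => X_subset_V k hk) hp
    (by simpa [Beyond, mul_assoc] using hq)
  exact ⟨p * l₁.prod, by simpa [mul_assoc] using h', h.2 l₁ l₂ rfl⟩

variable (S) in
/-- Elements of a finitely generated subgroup are reached in linearly many bounded steps. -/
theorem exists_reaches (hH : H.FG) :
    ∃ R K, ∀ h ∈ H, S.Reaches H R (K * S.d 1 h + K) 1 h := by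
  obtain ⟨r₀, h₀⟩ := exists_nearPath_const S hH
  obtain ⟨r₁, h₁⟩ := exists_near_of_infType S H r₀
  set r := r₀ + r₁ with hr
  obtain ⟨R', hR'⟩ := exists_near_of_between h₀ r
  obtain ⟨κ, hκ⟩ := exists_d_le_add h₀ r
  set R := R' + r with hR
  have seg : ∀ (i : Bool) (a a' q q' k k' : G), S.Near H r a → S.Near H r a' →
      a⁻¹ * a' ∈ S.V i → a⁻¹ * q ∈ S.C → a'⁻¹ * q' ∈ S.C → (q = a ∨ ¬ S.InfType H a) →
      (q' = a' ∨ ¬ S.InfType H a') → k ∈ H → S.d a k ≤ R → k' ∈ H → S.d a' k' ≤ R →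
      S.Reaches H (2 * R + 1) (S.d q q' + κ + 1) k k' := by
    intro i a a' q q' k k' ha ha' haa hq hq' ht ht' hk hak hk' hak'
    have h1 := hκ i a a' q q' ha ha' haa hq hq' ht ht'
    refine (reaches_of_between hk hak _ a' k' hk' hak' haa rfl fun z hz hd => ?_).mono
      (by omega : S.d a a' + 1 ≤ _)
    exact (hR' i a a' z ha ha' haa hz hd).mono (by omega)
  have main : ∀ (j : Bool) (g : G), g ∈ S.C ∨ Side S.V j g → ∀ o a q k : G, o * g ∈ H →
      o⁻¹ * a ∈ S.C → S.Near H r a → S.Beyond (!j) o 1 → a⁻¹ * q ∈ S.C →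
      (q = a ∨ ¬ S.InfType H a) → k ∈ H → S.d a k ≤ R →
      S.Reaches H (2 * R + 1) ((κ + 2) * S.d q (o * g) + (κ + 2)) k (o * g) := by
    have last : ∀ (j : Bool) (g : G), g ∈ S.V j → ∀ o a q k : G, o * g ∈ H → o⁻¹ * a ∈ S.C →
      S.Near H r a → a⁻¹ * q ∈ S.C → (q = a ∨ ¬ S.InfType H a) → k ∈ H →
      S.d a k ≤ R → S.Reaches H (2 * R + 1) ((κ + 2) * S.d q (o * g) + (κ + 2)) k (o * g) := by
      intro j g hg o a q k hog hoa ha hq ht hk hak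
      refine (seg j a (o * g) q (o * g) k (o * g) ha (near_of_mem hog)
        (coset_trans (coset_symm (coset_C_le_V hoa)) (by simpa using hg)) hq
        (by simp) ht (Or.inl rfl) hk hak hog (by simp [d_self])).mono ?_
      nlinarith
    intro j g hg
    rcases hg with hg | hg
    · intro o a q k hog hoa ha _ hq ht hk hak
      exact last j g (S.C_le_V _ hg) o a q k hog hoa ha hq ht hk hak
    induction hg with
    | @single j b hb hb' =>
      intro o a q k hog hoa ha _ hq ht hk hak
      exact last j b hb o a q k hog hoa ha hq ht hk hak
    | @cons j b g hb hb' hg ih =>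
      intro o a q k hog hoa ha h1o hq ht hk hak
      have hbC : b ∉ S.C := fun h => hb' (S.C_le_V _ h)
      have hoe : o⁻¹ * (o * b) ∈ S.V j := by simpa using hb
      have heoC : (o * b)⁻¹ * o ∉ S.C := fun h => hbC (by simpa using coset_symm h)
      have hoq : o⁻¹ * q ∈ S.C := coset_trans hoa hq
      have h1e : S.Beyond j (o * b) 1 := Or.inr (h1o.mul (coset_symm hoe) heoC)
      have hhe : S.Beyond (!j) (o * b) (o * (b * g)) := Or.inr (by simpa [mul_assoc] using hg)
      have hqe : S.Beyond j (o * b) q :=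
        beyond_of_mem (coset_trans (coset_symm hoe) (coset_C_le_V hoq))
      obtain ⟨q', hq', hd⟩ := hhe.exists_d_add_eq hqe
      obtain ⟨l, hl, hlp⟩ := h₀ _ hog
      obtain ⟨a₀, ha₀, hn₀⟩ := hl.exists_near_mem_C (e := o * b) (j := !j)
        (by simpa using h1e) (by simpa [hlp] using hhe)
      obtain ⟨a', ha', hn', ht'⟩ : ∃ a', (o * b)⁻¹ * a' ∈ S.C ∧ S.Near H r a' ∧
          (q' = a' ∨ ¬ S.InfType H a') := by
        by_cases hinf : S.InfType H a₀
        · exact ⟨q', hq', (h₁ a₀ q' hinf hn₀ (coset_trans (coset_symm ha₀) hq')).mono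
            (by omega), Or.inl rfl⟩
        · exact ⟨a₀, ha₀, hn₀.mono (by omega), Or.inr hinf⟩
      obtain ⟨k', hk', hak'⟩ := id hn'
      have hq'a' : a'⁻¹ * q' ∈ S.C := coset_trans (coset_symm ha') hq'
      have hqq : S.d q q' ≠ 0 := fun h => by
        obtain rfl := d_eq_zero h
        exact heoC (coset_trans hq' (coset_symm hoq))
      have s1 := seg j a a' q q' k k' ha hn' (coset_trans (coset_symm (coset_C_le_V hoa))
        (coset_trans hoe (coset_C_le_V ha'))) hq hq'a' ht ht' hk hak hk' (by omega)
      have s2 := ih (o * b) a' q' k' (by simpa [mul_assoc] using hog) ha' hn'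
        (by simpa using h1e) hq'a' ht' hk' (by omega)
      rw [mul_assoc] at s2
      refine (s1.trans s2).mono ?_
      have hc := d_comm (S := S) q (o * (b * g))
      have hc' := d_comm (S := S) q' (o * (b * g))
      have hqq' := d_comm (S := S) q' q
      rw [hc, hd, hc', hqq']
      have : 1 ≤ S.d q q' := by omega
      nlinarith
  refine ⟨2 * R + 1, κ + 2, fun h hh => ?_⟩
  have h1 : ∃ j, h ∈ S.C ∨ Side S.V j h := by
    rcases mem_C_or_side (S := S) true h with h' | h' | h'
    · exact ⟨true, Or.inl h'⟩
    · exact ⟨_, Or.inr h'⟩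
    · exact ⟨_, Or.inr h'⟩
  obtain ⟨j, hj⟩ := h1
  have := main j h hj 1 1 1 1 (by simpa using hh) (by simp) (near_of_mem H.one_mem)
    (Or.inl (by simp)) (by simp) (Or.inl rfl) H.one_mem (by simp [d_self])
  simpa using this

theorem hasPropertyQ (S : CyclicAmalgam G) : HasPropertyQ G := by
  intro H hH
  obtain ⟨R, K, h⟩ := S.exists_reaches hH
  let Y : Set H := {y | S.d 1 (y : G) ≤ R}
  have key : ∀ a : H, ∃ l : List H, l.length ≤ K * S.d 1 (a : G) + K ∧ (∀ y ∈ l, y ∈ Y) ∧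
      l.prod = a := by
    rintro ⟨a, ha⟩
    obtain ⟨l, hl, hlR, hla⟩ := h a ha
    lift l to List H using fun y hy => (hlR y hy).1
    refine ⟨l, by simpa using hl, fun y hy => ?_, ?_⟩
    · exact (hlR y (List.mem_map_of_mem hy)).2
    · apply Subtype.ext
      rw [one_mul] at hla
      exact (map_list_prod H.subtype l).trans hla
  refine ⟨Y, ⟨?_, ?_, ?_⟩, S.gens, isSymmGen_gens, K + 1, by positivity, fun a => ?_⟩
  · exact (finite_ball (S := S) 1 R).preimage Subtype.val_injective.injOn
  · intro y hy
    have := d_mul_left (S := S) (y : G) 1 (y : G)⁻¹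
    rw [mul_one, mul_inv_cancel] at this
    change S.d 1 ((y : G)⁻¹) ≤ R
    rw [← this, d_comm]; exact hy
  · rw [eq_top_iff]
    intro a _
    obtain ⟨l, -, hlY, rfl⟩ := key a
    exact list_prod_mem_closure hlY
  · obtain ⟨l, hl, hlY, rfl⟩ := key a
    have h1 := (wordLength_prod_le hlY).trans hl
    have e : S.d 1 (l.prod : G) = wordLength S.gens (l.prod : G) := by simp [d, wordDist]
    rw [e] at h1
    have h2 : (wordLength Y l.prod : ℝ) ≤ K * wordLength S.gens (l.prod : G) + K := by
      exact_mod_cast h1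
    have h3 : (0 : ℝ) ≤ wordLength S.gens (l.prod : G) := by positivity
    linarith

end CyclicAmalgam

/-- The length of the longest common prefix of two lists. -/
def List.commonPrefixLength {α : Type u} [DecidableEq α] : List α → List α → ℕ
  | a :: l, b :: m => if a = b then l.commonPrefixLength m + 1 else 0
  | _, _ => 0

theorem List.min_commonPrefixLength_le {α : Type u} [DecidableEq α] (l m n : List α) :
    min (l.commonPrefixLength m) (m.commonPrefixLength n) ≤ l.commonPrefixLength n := by
  induction l generalizing m n with
  | nil => simp [List.commonPrefixLength]
  | cons a l ih =>
    rcases m with _ | ⟨b, m⟩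
    · simp [List.commonPrefixLength]
    rcases n with _ | ⟨c, n⟩
    · simp [List.commonPrefixLength]
    by_cases hab : a = b <;> by_cases hbc : b = c
    · subst hab hbc
      have := ih m n
      simp only [List.commonPrefixLength, if_true]
      omega
    · simp [List.commonPrefixLength, hbc]
    all_goals simp only [List.commonPrefixLength, if_neg hab, Nat.zero_min, Nat.zero_le]

namespace FreeGroup

variable {α : Type u}

section Norm

variable [DecidableEq α]

theorem norm_mk_of_isReduced {l : List (α × Bool)} (hl : IsReduced l) : (mk l).norm = l.length := by
  rw [norm, toWord_mk, hl.reduce_eq]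

theorem norm_inv_mk_mul_mk {l m : List (α × Bool)} (hl : IsReduced l) (hm : IsReduced m) :
    ((mk l)⁻¹ * mk m).norm + 2 * l.commonPrefixLength m = l.length + m.length := by
  induction l generalizing m with
  | nil =>
    have : (mk ([] : List (α × Bool))) = 1 := rfl
    simp [List.commonPrefixLength, this, norm_mk_of_isReduced hm]
  | cons a l ih =>
    rcases m with _ | ⟨b, m⟩
    · have : (mk ([] : List (α × Bool))) = 1 := rfl
      rw [this, mul_one, norm_inv_eq, norm_mk_of_isReduced hl]
      simp [List.commonPrefixLength]
    by_cases hab : a = b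
    · subst hab
      have := ih (m := m) (List.IsChain.tail hl) (List.IsChain.tail hm)
      have h : (mk (a :: l))⁻¹ * mk (a :: m) = (mk l)⁻¹ * mk m := by
        have hmk : ∀ n : List (α × Bool), mk (a :: n) = mk [a] * mk n := fun n => by
          rw [mul_mk]; rfl
        rw [hmk l, hmk m]
        group
      simp only [List.commonPrefixLength, if_true, h, List.length_cons]
      omega
    · have hinv : IsReduced (invRev (a :: l)) := by
        have h := isReduced_toWord (x := (mk (a :: l))⁻¹)
        rwa [toWord_inv, toWord_mk, hl.reduce_eq] at h
      have hred : IsReduced (invRev (a :: l) ++ b :: m) := by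
        refine List.isChain_append.2 ⟨hinv, hm, ?_⟩
        rw [invRev_cons]
        rcases a with ⟨a, s⟩
        rcases b with ⟨b, t⟩
        cases s <;> cases t <;> simp_all [invRev]
      rw [inv_mk, mul_mk, norm_mk_of_isReduced hred]
      simp [List.commonPrefixLength, hab]

theorem norm_inv_mul (x y : FreeGroup α) :
    (x⁻¹ * y).norm + 2 * x.toWord.commonPrefixLength y.toWord = x.norm + y.norm := by
  have := norm_inv_mk_mul_mk (isReduced_toWord (x := x)) (isReduced_toWord (x := y))
  rwa [mk_toWord, mk_toWord] at this

/-- The word metric of a free group satisfies the four point condition of a tree. -/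
theorem norm_four_point (x y z w : FreeGroup α) :
    (x⁻¹ * z).norm + (y⁻¹ * w).norm ≤ (x⁻¹ * y).norm + (z⁻¹ * w).norm ∨
      (x⁻¹ * z).norm + (y⁻¹ * w).norm ≤ (y⁻¹ * z).norm + (x⁻¹ * w).norm := by
  have h : ∀ y z w : FreeGroup α, z.norm + (y⁻¹ * w).norm ≤ y.norm + (z⁻¹ * w).norm ∨
      z.norm + (y⁻¹ * w).norm ≤ (y⁻¹ * z).norm + w.norm := by
    intro y z w
    have := norm_inv_mul y w
    have := norm_inv_mul z w
    have := norm_inv_mul y z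
    have := List.min_commonPrefixLength_le y.toWord z.toWord w.toWord
    omega
  have := h (x⁻¹ * y) (x⁻¹ * z) (x⁻¹ * w)
  simpa [mul_assoc] using this

theorem norm_pow_of_isCyclicallyReduced {x : FreeGroup α} (hx : IsCyclicallyReduced x.toWord)
    (n : ℕ) : (x ^ n).norm = n * x.norm := by
  rw [norm, toWord_pow, (hx.flatten_replicate n).isReduced.reduce_eq, norm]
  simp

theorem norm_zpow_of_isCyclicallyReduced {x : FreeGroup α} (hx : IsCyclicallyReduced x.toWord)
    (n : ℤ) : (x ^ n).norm = n.natAbs * x.norm := by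
  rcases Int.natAbs_eq n with h | h
  · conv_lhs => rw [h, zpow_natCast]
    exact norm_pow_of_isCyclicallyReduced hx _
  · conv_lhs => rw [h, zpow_neg, zpow_natCast, norm_inv_eq]
    exact norm_pow_of_isCyclicallyReduced hx _

theorem exists_conj_isCyclicallyReduced (x : FreeGroup α) :
    ∃ t y : FreeGroup α, t * y * t⁻¹ = x ∧ IsCyclicallyReduced y.toWord := by
  have hr := reduceCyclically.isCyclicallyReduced (isReduced_toWord (x := x))
  refine ⟨mk (reduceCyclically.conjugator x.toWord), mk (reduceCyclically x.toWord), ?_, ?_⟩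
  · rw [inv_mk, mul_mk, mul_mk, reduceCyclically.conj_conjugator_reduceCyclically, mk_toWord]
  · rwa [toWord_mk, hr.isReduced.reduce_eq]

theorem norm_list_prod_le {L : ℕ} {l : List (FreeGroup α)} (hl : ∀ x ∈ l, x.norm ≤ L) :
    l.prod.norm ≤ L * l.length := by
  induction l with
  | nil => simp
  | cons a l ih =>
    rw [List.prod_cons, List.length_cons]
    have := norm_mul_le a l.prod
    have := ih fun x hx => hl x (List.mem_cons_of_mem _ hx)
    have := hl a List.mem_cons_self
    nlinarith

theorem exists_list_prod_eq {L : ℕ} (hL : 0 < L) (x : FreeGroup α) :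
    ∃ l : List (FreeGroup α), (∀ y ∈ l, y.norm ≤ L) ∧ l.prod = x ∧
      L * l.length < x.norm + L := by
  induction hn : x.norm using Nat.strong_induction_on generalizing x with
  | _ n ih =>
    rcases Nat.eq_zero_or_pos n with h0 | h0
    · subst h0
      exact ⟨[], by simp, by simp [norm_eq_zero.1 hn], by simpa using hL⟩
    by_cases hle : n ≤ L
    · exact ⟨[x], by simp [hn, hle], by simp, by simp; omega⟩
    have hp : (mk (x.toWord.take L)).norm ≤ L := norm_mk_le.trans (by simp)
    have hq : (mk (x.toWord.drop L)).norm ≤ n - L :=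
      norm_mk_le.trans (by simp [← hn, norm])
    obtain ⟨l, hl, hprod, hlen⟩ := ih _ (by omega) (mk (x.toWord.drop L)) rfl
    refine ⟨mk (x.toWord.take L) :: l, by simpa [hp] using hl, ?_, ?_⟩
    · rw [List.prod_cons, hprod, mul_mk, List.take_append_drop, mk_toWord]
    · rw [List.length_cons, mul_add, mul_one]
      omega

variable (α) in
/-- The ball of radius `L` around the identity of a free group. -/
def normBall (L : ℕ) : Set (FreeGroup α) := {x | x.norm ≤ L}

theorem finite_normBall [Finite α] (L : ℕ) : (normBall α L).Finite := by
  refine ((List.finite_length_le (α × Bool) L).image mk).subset fun x hx => ?_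
  exact ⟨x.toWord, hx, mk_toWord⟩

theorem inv_mem_normBall {L : ℕ} : ∀ x ∈ normBall α L, x⁻¹ ∈ normBall α L := fun x hx => by
  rw [normBall, Set.mem_ofPred_eq, norm_inv_eq]
  exact hx

theorem closure_normBall {L : ℕ} (hL : 0 < L) : Subgroup.closure (normBall α L) = ⊤ := by
  rw [eq_top_iff]
  intro x _
  obtain ⟨l, hl, rfl, -⟩ := exists_list_prod_eq hL x
  exact list_prod_mem_closure hl

theorem norm_le_wordLength {L : ℕ} (hL : 0 < L) (x : FreeGroup α) :
    x.norm ≤ L * wordLength (normBall α L) x := by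
  obtain ⟨l, hl, hlX, rfl⟩ := exists_geodesic_word (inv_mem_normBall (L := L))
    (show x ∈ Subgroup.closure (normBall α L) by simp [closure_normBall hL])
  rw [← hl]
  exact norm_list_prod_le hlX

theorem wordLength_lt_norm {L : ℕ} (hL : 0 < L) (x : FreeGroup α) :
    L * wordLength (normBall α L) x < x.norm + L := by
  obtain ⟨l, hl, rfl, hlen⟩ := exists_list_prod_eq hL x
  exact (Nat.mul_le_mul_left L (wordLength_prod_le hl)).trans_lt hlen

theorem wordLength_zpow {x : FreeGroup α} (hx : IsCyclicallyReduced x.toWord) (hL : 0 < x.norm)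
    (n : ℤ) : wordLength (normBall α x.norm) (x ^ n) = n.natAbs := by
  have h₁ := norm_le_wordLength hL (x ^ n)
  have h₂ := wordLength_lt_norm hL (x ^ n)
  rw [norm_zpow_of_isCyclicallyReduced hx] at h₁ h₂
  apply le_antisymm
  · have : wordLength (normBall α x.norm) (x ^ n) < n.natAbs + 1 := by
      apply Nat.lt_of_mul_lt_mul_left (a := x.norm)
      rw [mul_add, mul_one, mul_comm x.norm n.natAbs]
      exact h₂
    omega
  · apply Nat.le_of_mul_le_mul_left (c := x.norm) _ hL
    rwa [mul_comm x.norm n.natAbs]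

end Norm

theorem isCyclic_of_isMulCommutative (F : Type u) [Group F] [IsFreeGroup F] [IsMulCommutative F] :
    IsCyclic F := by
  classical
  let e := IsFreeGroup.toFreeGroup F
  have hsub : Subsingleton (IsFreeGroup.Generators F) := by
    refine ⟨fun a b => ?_⟩
    have h : of a * of b = of b * of a := by
      apply e.symm.injective
      rw [_root_.map_mul, _root_.map_mul]
      exact mul_comm' _ _
    have h' := congrArg toWord h
    by_contra hab
    simp [toWord_mul, toWord_of, reduce, hab] at h'
  rcases isEmpty_or_nonempty (IsFreeGroup.Generators F) with h | ⟨⟨a⟩⟩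
  · have := e.toEquiv.subsingleton
    infer_instance
  · let : Unique (IsFreeGroup.Generators F) := ⟨⟨a⟩, fun _ => Subsingleton.elim _ _⟩
    exact (e.trans mulEquivIntOfUnique).isCyclic.2 inferInstance

theorem exists_zpowers_of_commute {x y : FreeGroup α} (h : Commute x y) :
    ∃ z : FreeGroup α, x ∈ Subgroup.zpowers z ∧ y ∈ Subgroup.zpowers z := by
  let K := Subgroup.closure {x, y}
  have : IsMulCommutative K := Subgroup.isMulCommutative_closure (by
    rintro a (rfl | rfl) b (rfl | rfl)
    exacts [rfl, h, h.symm, rfl])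
  obtain ⟨⟨z, hz⟩⟩ := isCyclic_of_isMulCommutative K
  refine ⟨z, ?_, ?_⟩
  · obtain ⟨n, hn⟩ := hz ⟨x, Subgroup.subset_closure (by simp)⟩
    exact ⟨n, by simpa using congrArg Subtype.val hn⟩
  · obtain ⟨n, hn⟩ := hz ⟨y, Subgroup.subset_closure (by simp)⟩
    exact ⟨n, by simpa using congrArg Subtype.val hn⟩

theorem mem_zpowers_of_commute {u x : FreeGroup α} (hu : u ≠ 1)
    (hunp : ¬ ∃ (z : FreeGroup α) (n : ℕ), 2 ≤ n ∧ z ^ n = u) (h : Commute x u) :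
    x ∈ Subgroup.zpowers u := by
  obtain ⟨z, hx, n, hn⟩ := exists_zpowers_of_commute h
  replace hn : z ^ n = u := hn
  have hz : z ∈ Subgroup.zpowers u := by
    rcases Int.natAbs_eq n with h | h <;> rw [h] at hn
    · by_cases h2 : 2 ≤ n.natAbs
      · exact absurd ⟨z, _, h2, by simpa only [zpow_natCast, zpow_neg, inv_pow] using hn⟩ hunp
      · interval_cases n.natAbs
        · simp at hn; exact absurd hn.symm hu
        · exact ⟨1, by simpa using hn.symm⟩
    · by_cases h2 : 2 ≤ n.natAbs
      · exact absurd ⟨z⁻¹, _, h2, by simpa only [zpow_natCast, zpow_neg, inv_pow] using hn⟩ hunp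
      · interval_cases n.natAbs
        · simp at hn; exact absurd hn.symm hu
        · exact ⟨-1, by simp [← hn]⟩
  exact Subgroup.zpowers_le.2 hz hx

theorem mem_zpowers_of_conj_zpow {u x : FreeGroup α} (hu : u ≠ 1)
    (hunp : ¬ ∃ (z : FreeGroup α) (n : ℕ), 2 ≤ n ∧ z ^ n = u) {n m : ℤ} (hn : n ≠ 0)
    (hm : m = n ∨ m = -n) (h : x * u ^ n * x⁻¹ = u ^ m) : x ∈ Subgroup.zpowers u := by
  rw [← conj_zpow] at h
  rcases hm with rfl | rfl
  · have h := zpow_left_injective hn h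
    exact mem_zpowers_of_commute hu hunp (mul_inv_eq_iff_eq_mul.1 h)
  · exfalso
    rw [← inv_zpow'] at h
    have h : x * u * x⁻¹ = u⁻¹ := zpow_left_injective hn h
    have hxx : Commute (x ^ 2) u := by
      have h' : x * u⁻¹ * x⁻¹ = u := by rw [← conj_inv, h, inv_inv]
      have : x ^ 2 * u * (x ^ 2)⁻¹ = u := by
        calc x ^ 2 * u * (x ^ 2)⁻¹ = x * (x * u * x⁻¹) * x⁻¹ := by simp [pow_two, mul_assoc]
          _ = u := by rw [h, h']
      exact mul_inv_eq_iff_eq_mul.1 this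
    obtain ⟨j, hj⟩ := mem_zpowers_of_commute hu hunp hxx
    replace hj : u ^ j = x ^ 2 := hj
    have h₁ : x * u ^ j * x⁻¹ = u ^ j := by rw [hj]; group
    rw [← conj_zpow, h] at h₁
    have hinv : u⁻¹ ≠ u := fun h => hu (sq_eq_one.1 (by
      rw [pow_two]; nth_rewrite 1 [← h]; exact inv_mul_cancel u))
    obtain rfl : j = 0 := by
      by_contra hj0
      exact hinv (zpow_left_injective hj0 h₁)
    rw [zpow_zero] at hj
    rw [sq_eq_one.1 hj.symm] at h
    exact hinv (by simpa using h.symm)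

end FreeGroup

open Monoid in
/-- A group `G` with maps from two groups `F true` and `F false` that identify `e true` with
`e false`, and a map onto their amalgamated product that is compatible with the inclusions. -/
structure AmalgamData {F : Bool → Type v} [∀ i, Group (F i)] (e : ∀ i, F i)
    (G : Type u) [Group G] where
  /-- The maps from the factors. -/
  ι : ∀ i, F i →* G
  /-- The comparison map to the amalgamated product. -/
  toPushout : G →* PushoutI fun i => zpowersHom (F i) (e i)
  ι_e : ι true (e true) = ι false (e false)
  toPushout_ι : ∀ i a, toPushout (ι i a) = PushoutI.of i a
  range_sup_range : (ι true).range ⊔ (ι false).range = ⊤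
  zpow_injective : ∀ i, Function.Injective fun n : ℤ => e i ^ n

namespace AmalgamData

open Monoid

variable {F : Bool → Type v} [∀ i, Group (F i)] {e : ∀ i, F i} {G : Type u} [Group G]

theorem zpowersHom_injective (S : AmalgamData e G) (i : Bool) :
    Function.Injective (zpowersHom (F i) (e i)) :=
  fun m n h => Multiplicative.toAdd.injective
    (S.zpow_injective i (by simpa [zpowersHom_apply] using h))

variable (S : AmalgamData e G)

theorem ι_injective (i : Bool) : Function.Injective (S.ι i) := fun a b h => by
  have h' := congrArg S.toPushout h
  rw [S.toPushout_ι, S.toPushout_ι] at h'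
  exact PushoutI.of_injective S.zpowersHom_injective i h'

theorem ι_e_eq (i : Bool) : S.ι i (e i) = S.ι true (e true) := by
  cases i
  · exact S.ι_e.symm
  · rfl

theorem toPushout_zpow (n : ℤ) : S.toPushout (S.ι true (e true) ^ n) =
    PushoutI.base (fun i => zpowersHom (F i) (e i)) (Multiplicative.ofAdd n) := by
  rw [← map_zpow, S.toPushout_ι, ← PushoutI.of_apply_eq_base _ true]
  simp [zpowersHom_apply]

theorem mem_zpowers {g : G} (ht : g ∈ (S.ι true).range) (hf : g ∈ (S.ι false).range) :
    g ∈ Subgroup.zpowers (S.ι true (e true)) := by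
  obtain ⟨a, rfl⟩ := ht
  obtain ⟨b, hb⟩ := hf
  have h : PushoutI.of (φ := fun i => zpowersHom (F i) (e i)) true a ∈
      (PushoutI.base fun i => zpowersHom (F i) (e i)).range := by
    rw [← PushoutI.inf_of_range_eq_base_range S.zpowersHom_injective (i := true) (j := false)
      (by decide)]
    refine ⟨⟨a, rfl⟩, ⟨b, ?_⟩⟩
    rw [← S.toPushout_ι, ← S.toPushout_ι, hb]
  obtain ⟨n, hn⟩ := h
  rw [← PushoutI.of_apply_eq_base _ true] at hn
  rw [← PushoutI.of_injective S.zpowersHom_injective true hn]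
  exact ⟨n.toAdd, by simp [zpowersHom_apply]⟩

theorem exists_not_mem_range {i : Bool} {a : G} (ha : a ∈ (S.ι i).range)
    (ha' : a ∉ (S.ι (!i)).range) :
    ∃ b : F i, S.ι i b = a ∧ b ∉ (zpowersHom (F i) (e i)).range := by
  obtain ⟨b, rfl⟩ := ha
  refine ⟨b, rfl, ?_⟩
  rintro ⟨n, rfl⟩
  refine ha' ⟨e (!i) ^ n.toAdd, ?_⟩
  rw [map_zpow, zpowersHom_apply, map_zpow, S.ι_e_eq, S.ι_e_eq i]

theorem exists_reduced_word {i : Bool} {g : G} (h : Side (fun i => (S.ι i).range) i g) :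
    ∃ w : CoprodI.Word F, PushoutI.Reduced (fun i => zpowersHom (F i) (e i)) w ∧
      w.fstIdx = some i ∧ PushoutI.ofCoprodI w.prod = S.toPushout g := by
  classical
  induction h with
  | @single i a ha ha' =>
    obtain ⟨b, rfl, hb⟩ := S.exists_not_mem_range ha ha'
    have hb1 : b ≠ 1 := fun h => hb (h ▸ one_mem _)
    refine ⟨CoprodI.Word.cons b .empty (by simp [CoprodI.Word.fstIdx]) hb1, ?_,
      CoprodI.Word.fstIdx_cons .., ?_⟩
    · intro x hx
      simp only [CoprodI.Word.cons, CoprodI.Word.empty, List.mem_singleton] at hx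
      subst hx
      exact hb
    · rw [CoprodI.Word.prod_cons, CoprodI.Word.prod_empty, mul_one, PushoutI.ofCoprodI_of,
        S.toPushout_ι]
  | @cons i a g ha ha' _ ih =>
    obtain ⟨b, rfl, hb⟩ := S.exists_not_mem_range ha ha'
    obtain ⟨w, hw, hwi, hwp⟩ := ih
    have hb1 : b ≠ 1 := fun h => hb (h ▸ one_mem _)
    refine ⟨CoprodI.Word.cons b w (by simp [hwi]) hb1, ?_, CoprodI.Word.fstIdx_cons .., ?_⟩
    · intro x hx
      simp only [CoprodI.Word.cons, List.mem_cons] at hx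
      rcases hx with rfl | hx
      · exact hb
      · exact hw x hx
    · rw [CoprodI.Word.prod_cons, map_mul, PushoutI.ofCoprodI_of, hwp, map_mul, S.toPushout_ι]

theorem not_side_false {g : G} (ht : Side (fun i => (S.ι i).range) true g) :
    ¬ Side (fun i => (S.ι i).range) false g := fun hf => by
  obtain ⟨w, hw, hwi, hwp⟩ := S.exists_reduced_word ht
  obtain ⟨w', hw', hwi', hwp'⟩ := S.exists_reduced_word hf
  obtain ⟨d⟩ := PushoutI.NormalWord.transversal_nonempty _ S.zpowersHom_injective
  obtain ⟨x, hx, hxm⟩ := hw.exists_normalWord_prod_eq d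
  obtain ⟨y, hy, hym⟩ := hw'.exists_normalWord_prod_eq d
  obtain rfl : x = y := PushoutI.NormalWord.prod_injective (by rw [hx, hy, hwp, hwp'])
  rw [CoprodI.Word.fstIdx, ← List.head?_map, ← hxm, hym, List.head?_map,
    ← CoprodI.Word.fstIdx, hwi'] at hwi
  simp at hwi

theorem side_not_mem {i : Bool} {g : G} (h : Side (fun i => (S.ι i).range) i g) :
    g ∉ Subgroup.zpowers (S.ι true (e true)) := by
  rintro ⟨n, rfl⟩
  obtain ⟨w, hw, hwi, hwp⟩ := S.exists_reduced_word h
  have := hw.eq_empty_of_mem_range S.zpowersHom_injective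
    (by rw [hwp]; exact ⟨_, (S.toPushout_zpow n).symm⟩)
  subst this
  simp [CoprodI.Word.fstIdx, CoprodI.Word.empty] at hwi

end AmalgamData

theorem wordLength_image {F : Type v} [Group F] {G : Type u} [Group G] {f : F →* G}
    (hf : Function.Injective f) (X : Set F) (a : F) :
    wordLength (f '' X) (f a) = wordLength X a := by
  unfold wordLength
  congr 1
  ext n
  constructor
  · rintro ⟨l, rfl, hl, hp⟩
    obtain ⟨l, rfl⟩ : ∃ l' : List F, l'.map f = l :=
      (Set.range_list_map f).ge fun x hx => Set.image_subset_range f X (hl x hx)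
    refine ⟨l, by simp, fun x hx => ?_, hf ?_⟩
    · exact (hf.mem_set_image).1 (hl _ (List.mem_map_of_mem hx))
    · rw [map_list_prod, hp]
  · rintro ⟨l, rfl, hl, rfl⟩
    refine ⟨l.map f, by simp, ?_, (map_list_prod f l).symm⟩
    intro x hx
    obtain ⟨y, hy, rfl⟩ := List.mem_map.1 hx
    exact ⟨y, hl y hy, rfl⟩

/-- The amalgamated product of two free groups over an infinite cyclic group which is generated in
one of the factors by an element that is not a proper power. -/
noncomputable def AmalgamData.cyclicAmalgam {n : Bool → ℕ} {e : ∀ i, FreeGroup (Fin (n i))}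
    {G : Type u} [Group G] (S : AmalgamData e G) (he : ∀ i, e i ≠ 1)
    (hnp : ¬ ∃ (z : FreeGroup (Fin (n true))) (m : ℕ), 2 ≤ m ∧ z ^ m = e true)
    (t y : ∀ i, FreeGroup (Fin (n i))) (hty : ∀ i, t i * y i * (t i)⁻¹ = e i)
    (hy : ∀ i, FreeGroup.IsCyclicallyReduced (y i).toWord) : CyclicAmalgam G :=
  let f (i : Bool) : FreeGroup (Fin (n i)) →* G := (S.ι i).comp (MulAut.conj (t i)).toMonoidHom
  have hf : ∀ i, Function.Injective (f i) := fun i =>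
    (S.ι_injective i).comp (MulAut.conj (t i)).injective
  have hrange : ∀ i, (f i).range = (S.ι i).range := fun i => by
    rw [MonoidHom.range_comp, MonoidHom.range_eq_top.2 (MulAut.conj (t i)).surjective,
      ← MonoidHom.range_eq_map]
  have hc : ∀ i, f i (y i) = S.ι true (e true) := fun i => by
    rw [← S.ι_e_eq i, ← hty i]; rfl
  have hpos : ∀ i, 0 < (y i).norm := fun i => by
    rw [Nat.pos_iff_ne_zero, Ne, FreeGroup.norm_eq_zero]
    intro h
    exact he i (by rw [← hty i, h]; simp)
  have hinv : ∀ i a, Function.invFun (f i) (f i a) = a := fun i =>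
    Function.leftInverse_invFun (hf i)
  { V := fun i => (S.ι i).range
    c := S.ι true (e true)
    X := fun i => f i '' FreeGroup.normBall _ (y i).norm
    ρ := fun i g => (Function.invFun (f i) g).norm
    L := fun i => (y i).norm
    L_pos := hpos
    mem_zpowers_c := fun g => S.mem_zpowers
    X_finite := fun i => (FreeGroup.finite_normBall _).image _
    X_inv := by
      rintro i _ ⟨x, hx, rfl⟩
      exact ⟨x⁻¹, FreeGroup.inv_mem_normBall x hx, map_inv _ _⟩
    closure_X := fun i => by
      rw [← MonoidHom.map_closure, FreeGroup.closure_normBall (hpos i), ← MonoidHom.range_eq_map,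
        hrange]
    sup_eq_top := S.range_sup_range
    c_mem_X := fun i => ⟨y i, le_refl (y i).norm, hc i⟩
    side_disjoint := fun g => S.not_side_false
    side_not_mem := fun i g => S.side_not_mem
    wordLength_zpow := fun i m => by
      rw [← hc i, ← map_zpow, wordLength_image (hf i), FreeGroup.wordLength_zpow (hy i) (hpos i)]
    ρ_hyp := by
      intro i
      simp only [← hrange]
      rintro _ ⟨a, rfl⟩ _ ⟨b, rfl⟩ _ ⟨c, rfl⟩ _ ⟨d, rfl⟩
      simp only [← map_inv, ← map_mul, hinv]
      exact FreeGroup.norm_four_point a b c d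
    ρ_le := by
      intro i
      rw [← hrange]
      rintro _ ⟨a, rfl⟩
      rw [hinv, wordLength_image (hf i)]
      exact FreeGroup.norm_le_wordLength (hpos i) a
    le_ρ := by
      intro i
      rw [← hrange]
      rintro _ ⟨a, rfl⟩
      rw [hinv, wordLength_image (hf i)]
      exact (FreeGroup.wordLength_lt_norm (hpos i) a).le
    malnormal := by
      rintro _ ⟨b, rfl⟩ p q hp hpq h
      rw [← map_zpow, ← map_zpow, ← map_inv, ← map_mul, ← map_mul] at h
      obtain ⟨j, rfl⟩ := FreeGroup.mem_zpowers_of_conj_zpow (he true) hnp hp hpq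
        (S.ι_injective true h)
      exact ⟨e false ^ j, by rw [map_zpow, map_zpow, S.ι_e]⟩ }

theorem AmalgamData.nonempty_cyclicAmalgam {n : Bool → ℕ} {e : ∀ i, FreeGroup (Fin (n i))}
    {G : Type u} [Group G] (S : AmalgamData e G) (he : ∀ i, e i ≠ 1)
    (hnp : ¬ ∃ (z : FreeGroup (Fin (n true))) (m : ℕ), 2 ≤ m ∧ z ^ m = e true) :
    Nonempty (CyclicAmalgam G) := by
  choose t y hty hy using fun i => FreeGroup.exists_conj_isCyclicallyReduced (e i)
  exact ⟨S.cyclicAmalgam he hnp t y hty hy⟩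

open Monoid in
/-- A one-relator group `⟨x, y | v(x) u(y)⟩` as an amalgamated product. -/
def oneRelatorAmalgamData (n : Bool → ℕ) (v : FreeGroup (Fin (n false)))
    (u : FreeGroup (Fin (n true))) (e : ∀ i, FreeGroup (Fin (n i))) (hf : e false = v⁻¹)
    (ht : e true = u) (he : ∀ i, e i ≠ 1) :
    AmalgamData e (PresentedGroup ({FreeGroup.map Sum.inl v * FreeGroup.map Sum.inr u} :
      Set (FreeGroup (Fin (n false) ⊕ Fin (n true))))) :=
  let rels : Set (FreeGroup (Fin (n false) ⊕ Fin (n true))) :=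
    {FreeGroup.map Sum.inl v * FreeGroup.map Sum.inr u}
  let φ (i : Bool) := zpowersHom (FreeGroup (Fin (n i))) (e i)
  let ι : ∀ i, FreeGroup (Fin (n i)) →* PresentedGroup rels := Bool.rec
    ((PresentedGroup.mk rels).comp (FreeGroup.map Sum.inl))
    ((PresentedGroup.mk rels).comp (FreeGroup.map Sum.inr))
  let q : Fin (n false) ⊕ Fin (n true) → PushoutI φ := Sum.elim
    (fun a => PushoutI.of (φ := φ) false (FreeGroup.of a))
    (fun a => PushoutI.of (φ := φ) true (FreeGroup.of a))
  have hq₁ : ∀ a, FreeGroup.lift q (FreeGroup.map Sum.inl a) = PushoutI.of (φ := φ) false a := by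
    intro a
    rw [← MonoidHom.comp_apply]
    congr 1
    ext a
    simp [q]
  have hq₂ : ∀ a, FreeGroup.lift q (FreeGroup.map Sum.inr a) = PushoutI.of (φ := φ) true a := by
    intro a
    rw [← MonoidHom.comp_apply]
    congr 1
    ext a
    simp [q]
  have hφ : PushoutI.of (φ := φ) true (e true) = PushoutI.of (φ := φ) false (e false) := by
    have h₁ := PushoutI.of_apply_eq_base φ true (Multiplicative.ofAdd 1)
    have h₂ := PushoutI.of_apply_eq_base φ false (Multiplicative.ofAdd 1)
    simp only [φ, zpowersHom_apply, toAdd_ofAdd, zpow_one] at h₁ h₂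
    exact h₁.trans h₂.symm
  { ι := ι
    toPushout := PresentedGroup.toGroup (f := q) (by
      rintro _ rfl
      rw [map_mul, hq₁, hq₂, ← ht, hφ, hf, map_inv, mul_inv_cancel])
    ι_e := by
      have h : PresentedGroup.mk rels (FreeGroup.map Sum.inl v * FreeGroup.map Sum.inr u) = 1 :=
        PresentedGroup.one_of_mem rfl
      rw [map_mul, ← inv_eq_iff_mul_eq_one] at h
      rw [ht, hf, map_inv]
      exact h.symm
    toPushout_ι := by
      rintro (_ | _) a
      · exact hq₁ a
      · exact hq₂ a
    range_sup_range := by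
      rw [eq_top_iff, ← PresentedGroup.closure_range_of, Subgroup.closure_le]
      rintro _ ⟨a | a, rfl⟩
      · exact le_sup_right (a := (ι true).range) (b := (ι false).range) ⟨FreeGroup.of a, rfl⟩
      · exact le_sup_left (a := (ι true).range) (b := (ι false).range) ⟨FreeGroup.of a, rfl⟩
    zpow_injective := fun i a b h => by
      have : e i ^ (a - b) = 1 := by rw [zpow_sub, mul_inv_eq_one]; exact h
      rw [IsMulTorsionFree.zpow_eq_one_iff_right (he i)] at this
      omega }

/-- **Corollary 5.** The one-relator group `⟨x₁,…,x_k, y₁,…,y_s ∣ vu = 1⟩`, where `u` is not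
a proper power, is word hyperbolic and has property (Q). -/
theorem one_relator_propertyQ (k s : ℕ)
    (v : FreeGroup (Fin k)) (u : FreeGroup (Fin s))
    (hv : v ≠ 1) (hu : u ≠ 1)
    (hunp : ¬ ∃ (z : FreeGroup (Fin s)) (n : ℕ), 2 ≤ n ∧ z ^ n = u) :
    IsWordHyperbolic (PresentedGroup
        ({FreeGroup.map Sum.inl v * FreeGroup.map Sum.inr u} : Set (FreeGroup (Fin k ⊕ Fin s)))) ∧
    HasPropertyQ (PresentedGroup
        ({FreeGroup.map Sum.inl v * FreeGroup.map Sum.inr u} : Set (FreeGroup (Fin k ⊕ Fin s)))) := by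
  let n : Bool → ℕ := Bool.rec k s
  let e : ∀ i, FreeGroup (Fin (n i)) := Bool.rec v⁻¹ u
  have he : ∀ i, e i ≠ 1 := by
    rintro (_ | _)
    · exact inv_ne_one.2 hv
    · exact hu
  obtain ⟨S⟩ := (oneRelatorAmalgamData n v u e rfl rfl he).nonempty_cyclicAmalgam he hunp
  exact ⟨S.isWordHyperbolic, S.hasPropertyQ⟩
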